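/- Let 𝔤 be a finite-dimensional complex simple Lie algebra of type F4, and let (e,h,f) be an sl2-triple in 𝔤 such that e is a distinguished nilpotent element which is not regular. Then e satisfies property (P). -/

import Mathlib

open scoped ComplexOrder

/-- The centralizer `𝔤^e = {x ∈ 𝔤 : ⁅x, e⁆ = 0}` of an element `e`, as a Lie subalgebra. -/
def centralizer (L : Type*) [LieRing L] [LieAlgebra ℂ L] (e : L) : LieSubalgebra ℂ L where
  carrier := {x : L | ⁅x, e⁆ = 0}
  add_mem' := fun {a b} ha hb => by
    simp only [Set.mem_setOf_eq] at *
    rw [add_lie, ha, hb, add_zero]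
  zero_mem' := by simp
  smul_mem' := fun c a ha => by
    simp only [Set.mem_setOf_eq] at *
    rw [smul_lie, ha, smul_zero]
  lie_mem' := fun {a b} ha hb => by
    simp only [Set.mem_setOf_eq] at *
    simp [lie_lie, ha, hb]

/-- Membership in the centre `𝔷(𝔤^e)` of the centralizer of `e`:
`v` centralizes `e` and commutes with every element of `𝔤^e`. -/
def InCenterOfCentralizer (L : Type*) [LieRing L] [LieAlgebra ℂ L] (e v : L) : Prop :=
  ⁅v, e⁆ = 0 ∧ ∀ y : L, ⁅y, e⁆ = 0 → ⁅v, y⁆ = 0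

/-- The centre `𝔷(𝔤^e)` of the centralizer of `e`, as a subspace of `L`. -/
def zCenter (L : Type*) [LieRing L] [LieAlgebra ℂ L] (e : L) : Submodule ℂ L where
  carrier := {v : L | ⁅v, e⁆ = 0 ∧ ∀ y : L, ⁅y, e⁆ = 0 → ⁅v, y⁆ = 0}
  add_mem' := fun {a b} ha hb => ⟨by rw [add_lie, ha.1, hb.1, add_zero],
    fun y hy => by rw [add_lie, ha.2 y hy, hb.2 y hy, add_zero]⟩
  zero_mem' := ⟨zero_lie e, fun y _ => zero_lie y⟩
  smul_mem' := fun c a ha => ⟨by rw [smul_lie, ha.1, smul_zero],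
    fun y hy => by rw [smul_lie, ha.2 y hy, smul_zero]⟩

/-- Property (P) for an `sl₂`-triple `(e, h, f)`: for every nonzero `v ∈ 𝔷(𝔤^e)`, the
eigenspace `𝔷_max` of the restriction of `ad h` to `𝔷(𝔤^e)` for its largest eigenvalue is
contained in `[[f, 𝔤^e], v] = {⁅⁅f, x⁆, v⁆ : x ∈ 𝔤^e}`. -/
def PropertyP (L : Type*) [LieRing L] [LieAlgebra ℂ L] (e h f : L) : Prop :=
  ∀ m : ℂ,
    (∃ z : L, z ≠ 0 ∧ InCenterOfCentralizer L e z ∧ ⁅h, z⁆ = m • z) →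
    (∀ m' : ℂ, (∃ z : L, z ≠ 0 ∧ InCenterOfCentralizer L e z ∧ ⁅h, z⁆ = m' • z) → m' ≤ m) →
    ∀ v : L, InCenterOfCentralizer L e v → v ≠ 0 →
      ∀ z : L, InCenterOfCentralizer L e z → ⁅h, z⁆ = m • z →
        ∃ x : L, ⁅x, e⁆ = 0 ∧ ⁅⁅f, x⁆, v⁆ = z

/-- The stabilizer `{x ∈ 𝔮 : ξ(⁅x, y⁆) = 0 for all y ∈ 𝔮}` of a linear functional `ξ`. -/
def coadStab (Q : Type*) [LieRing Q] [LieAlgebra ℂ Q] (ξ : Module.Dual ℂ Q) : Submodule ℂ Q where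
  carrier := {x : Q | ∀ y : Q, ξ ⁅x, y⁆ = 0}
  add_mem' := fun {a b} ha hb y => by rw [add_lie, map_add, ha y, hb y, add_zero]
  zero_mem' := fun y => by rw [zero_lie, map_zero]
  smul_mem' := fun c a ha y => by rw [smul_lie, map_smul, ha y, smul_zero]

/-- The index of a complex Lie algebra:
`ind 𝔮 = min_{ξ ∈ 𝔮*} dim {x ∈ 𝔮 : ξ(⁅x, y⁆) = 0 for all y ∈ 𝔮}`. -/
noncomputable def lieIndex (Q : Type*) [LieRing Q] [LieAlgebra ℂ Q] : ℕ :=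
  ⨅ ξ : Module.Dual ℂ Q, Module.finrank ℂ ↥(coadStab Q ξ)

/-- A nilpotent element `e` is distinguished if the only `x ∈ 𝔤^e` such that `ad x` is a
semisimple endomorphism of `𝔤` is `x = 0`. -/
def IsDistinguished (L : Type*) [LieRing L] [LieAlgebra ℂ L] (e : L) : Prop :=
  ∀ x : L, ⁅x, e⁆ = 0 → (LieAlgebra.ad ℂ L x).IsSemisimple → x = 0

/-!
Conjugating `h` into the Cartan subalgebra of a Chevalley basis and into the dominant chamber, one
reads off its values `d` at the simple roots. Since `e` is distinguished, `d` has entries in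
`{0, 1, 2}` and `dim 𝔤(0) = dim 𝔤(2)` for the grading by `h`, which leaves four possibilities, one
of them regular. For each of them `⁅·, e⁆ : 𝔤(0) → 𝔤(2)` is bijective; the elements of `𝔤(2)` with
this property form a connected set on which the group with Lie algebra `𝔤(0)` has open orbits, so
`e` is conjugate to a fixed representative with integer coordinates.

For a representative, `⁅u, v⁆` lies in `[[f, 𝔤^e], v]` whenever `u` is an eigenvector of `ad h` of
nonnegative integral weight with `⁅e, ⁅e, u⁆⁆ = 0`. It remains to find, in coordinates, such `u`
that move the weight vectors of `𝔷(𝔤^e)` to `𝔷_max`. All structure constants are computed in the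
representation of dimension 27 by integer arithmetic.
-/

section CharpolyCoeff

open Filter Topology

variable {𝕜 V M : Type*} [Field 𝕜] [AddCommGroup V] [Module 𝕜 V] [FiniteDimensional 𝕜 V]
  [AddCommGroup M] [Module 𝕜 M] [FiniteDimensional 𝕜 M]

lemma charpoly_coeff_zero_ne_zero_iff_surjective (f : Module.End 𝕜 M) :
    f.charpoly.coeff 0 ≠ 0 ↔ Function.Surjective f := by
  rw [← LinearMap.range_eq_top, ← LinearMap.isUnit_iff_range_eq_top,
    LinearMap.isUnit_iff_isUnit_det, isUnit_iff_ne_zero, LinearMap.det_eq_sign_charpoly_coeff]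
  simp

lemma exists_polynomial_eval_eq_charpoly_coeff (φ : V →ₗ[𝕜] Module.End 𝕜 M) (k : ℕ) (x y : V) :
    ∃ q : Polynomial 𝕜, ∀ t : 𝕜, q.eval t = (φ (x + t • y)).charpoly.coeff k := by
  classical
  let b := Module.finBasis 𝕜 V
  refine ⟨MvPolynomial.aeval
    (fun i => Polynomial.C (b.repr x i) + Polynomial.X * Polynomial.C (b.repr y i))
    ((φ.polyCharpoly b).coeff k), fun t => ?_⟩
  rw [← LinearMap.polyCharpoly_coeff_eval φ b, ← Polynomial.coe_aeval_eq_eval,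
    MvPolynomial.comp_aeval_apply, MvPolynomial.aeval_eq_eval]
  congr 2
  ext i
  simp [Polynomial.aeval_def, mul_comm t]

lemma finite_setOf_charpoly_coeff_eq_zero (φ : V →ₗ[𝕜] Module.End 𝕜 M) (k : ℕ) {x y : V}
    {t₀ : 𝕜} (h : (φ (x + t₀ • y)).charpoly.coeff k ≠ 0) :
    {t : 𝕜 | (φ (x + t • y)).charpoly.coeff k = 0}.Finite := by
  obtain ⟨q, hq⟩ := exists_polynomial_eval_eq_charpoly_coeff φ k x y
  simp only [← hq] at h ⊢
  exact Polynomial.finite_setOfPred_isRoot fun hq0 => h (by rw [hq0, Polynomial.eval_zero])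

lemma exists_mem_nhds_charpoly_coeff_ne_zero {𝕜 V M : Type*} [NontriviallyNormedField 𝕜]
    [CompleteSpace 𝕜] [AddCommGroup V] [Module 𝕜 V] [FiniteDimensional 𝕜 V] [TopologicalSpace V]
    [ContinuousAdd V] [ContinuousSMul 𝕜 V] [AddCommGroup M] [Module 𝕜 M] [FiniteDimensional 𝕜 M]
    (φ : V →ₗ[𝕜] Module.End 𝕜 M) (k : ℕ) {x y : V} (hy : (φ y).charpoly.coeff k ≠ 0)
    {s : Set V} (hs : s ∈ 𝓝 x) : ∃ z ∈ s, (φ z).charpoly.coeff k ≠ 0 := by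
  have hcont : Continuous fun t : 𝕜 => x + t • (y - x) := by fun_prop
  have hdense := (finite_setOf_charpoly_coeff_eq_zero φ k (x := x) (y := y - x) (t₀ := 1)
    (by simpa using hy)).countable.dense_compl 𝕜
  obtain ⟨t, ht, hts⟩ := hdense.inter_nhds_nonempty
    (hcont.continuousAt.preimage_mem_nhds (x := 0) (by simpa using hs))
  exact ⟨_, hts, ht⟩

/-- The nonvanishing locus of a coefficient of the characteristic polynomial is connected: on the
complex line through two of its points, only finitely many points are removed. -/
lemma rel_of_eventually_nhds {V M : Type*} [AddCommGroup V] [Module ℂ V] [FiniteDimensional ℂ V]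
    [TopologicalSpace V] [ContinuousAdd V] [ContinuousSMul ℂ V]
    [AddCommGroup M] [Module ℂ M] [FiniteDimensional ℂ M]
    (φ : V →ₗ[ℂ] Module.End ℂ M) (k : ℕ) {r : V → V → Prop}
    (hsymm : ∀ {x y}, r x y → r y x) (htrans : ∀ {x y z}, r x y → r y z → r x z)
    (hloc : ∀ x, (φ x).charpoly.coeff k ≠ 0 →
      ∀ᶠ y in 𝓝 x, (φ y).charpoly.coeff k ≠ 0 → r x y)
    {x y : V} (hx : (φ x).charpoly.coeff k ≠ 0) (hy : (φ y).charpoly.coeff k ≠ 0) : r x y := by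
  let γ (t : ℂ) : V := x + t • (y - x)
  have hγ : Continuous γ := by fun_prop
  let s : Set ℂ := {t | (φ (γ t)).charpoly.coeff k = 0}
  have hs : s.Finite :=
    finite_setOf_charpoly_coeff_eq_zero φ k (t₀ := 0) (by simpa using hx)
  have hconn : IsPreconnected sᶜ :=
    (hs.countable.isConnected_compl_of_one_lt_rank (by simp)).isPreconnected
  have h01 : r (γ 0) (γ 1) :=
    hconn.induction₂ (fun t u => r (γ t) (γ u))
      (fun t ht => by
        filter_upwards [eventually_nhdsWithin_of_eventually_nhds
          (hγ.continuousAt.eventually (hloc (γ t) ht)), self_mem_nhdsWithin] with u hu hus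
        exact hu hus)
      (fun _ _ _ _ _ _ => htrans) (fun _ _ _ _ => hsymm)
      (by simpa [s, γ] using hx) (by simpa [s, γ] using hy)
  simpa [γ] using h01

end CharpolyCoeff

section Exponential

open Filter Topology NormedSpace

variable {𝕜 V W : Type*} [RCLike 𝕜] [NormedAddCommGroup V] [NormedSpace 𝕜 V] [CompleteSpace V]
  [NormedAddCommGroup W] [NormedSpace 𝕜 W] [CompleteSpace W]

lemma hasSum_exp_apply (D : V →L[𝕜] V) (v : V) :
    HasSum (fun n : ℕ => ((n.factorial : 𝕜)⁻¹) • (D ^ n) v) (exp D v) := by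
  simpa using (exp_series_hasSum_exp' (𝕂 := 𝕜) D).mapL (ContinuousLinearMap.apply 𝕜 V v)

lemma exp_apply_eq_sum (D : V →L[𝕜] V) {v : V} {n : ℕ} (h : (D ^ n) v = 0) :
    exp D v = ∑ k ∈ Finset.range n, ((k.factorial : 𝕜)⁻¹) • (D ^ k) v := by
  refine (hasSum_exp_apply D v).unique (hasSum_sum_of_ne_finset_zero fun k hk => ?_)
  obtain ⟨j, rfl⟩ := Nat.exists_eq_add_of_le' (not_lt.1 (Finset.mem_range.not.1 hk))
  rw [pow_add, mul_apply_eq_comp, h, map_zero, smul_zero]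

lemma map_exp_apply (T : V →L[𝕜] W) (D : V →L[𝕜] V) (D' : W →L[𝕜] W)
    (h : ∀ v, T (D v) = D' (T v)) (v : V) : T (exp D v) = exp D' (T v) := by
  have hpow (n : ℕ) : T ((D ^ n) v) = (D' ^ n) (T v) := by
    induction n with
    | zero => simp
    | succ n ih =>
      rw [pow_succ', pow_succ', mul_apply_eq_comp, mul_apply_eq_comp, h, ih]
  refine ((hasSum_exp_apply D v).mapL T).unique ?_
  simpa only [map_smul, hpow] using hasSum_exp_apply D' (T v)

lemma exp_neg_apply_exp_apply (D : V →L[𝕜] V) (v : V) : exp (-D) (exp D v) = v := by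
  let : NormedAlgebra ℚ (V →L[𝕜] V) := NormedAlgebra.restrictScalars ℚ 𝕜 _
  rw [← mul_apply_eq_comp, ← exp_add_of_commute (Commute.refl D).neg_left,
    neg_add_cancel, exp_zero, one_apply_eq_self]

lemma hasDerivAt_exp_smul_apply (D : V →L[𝕜] V) (v : V) (t : 𝕜) :
    HasDerivAt (fun t : 𝕜 => exp (t • D) v) (D (exp (t • D) v)) t := by
  simpa using (hasDerivAt_exp_smul_const' D t).clm_apply (hasDerivAt_const t v)

/-- The exponential of a derivation preserves the product: `exp(-tD) B(exp(tD) x, exp(tD) y)` has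
zero derivative in `t`. -/
lemma exp_apply_bilinear (B : V →L[𝕜] V →L[𝕜] V) (D : V →L[𝕜] V)
    (hD : ∀ x y, D (B x y) = B (D x) y + B x (D y)) (x y : V) :
    exp D (B x y) = B (exp D x) (exp D y) := by
  let F (t : 𝕜) : V := exp (t • -D) (B (exp (t • D) x) (exp (t • D) y))
  have hF (t : 𝕜) : HasDerivAt F 0 t := by
    have hB : HasDerivAt (fun t => B (exp (t • D) x) (exp (t • D) y))
        (D (B (exp (t • D) x) (exp (t • D) y))) t := by
      rw [hD]
      exact (B.hasFDerivAt.comp_hasDerivAt t (hasDerivAt_exp_smul_apply D x t)).clm_apply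
        (hasDerivAt_exp_smul_apply D y t)
    have := (hasDerivAt_exp_smul_const (-D) t).clm_apply hB
    simpa [F] using this
  have hconst : F 1 = F 0 :=
    is_const_of_deriv_eq_zero (fun t => (hF t).differentiableAt) (fun t => (hF t).deriv) 1 0
  have hneg : exp (-D) (B (exp D x) (exp D y)) = B x y := by simpa [F, exp_zero] using hconst
  rw [← hneg]
  simpa using exp_neg_apply_exp_apply (-D) (B (exp D x) (exp D y))

/-- The derivative at the origin of `(u, y) ↦ exp (A u) (x + ι y)` is `(u, y) ↦ A u x + ι y`, so the
map is open there as soon as the latter is surjective. -/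
lemma eventually_exists_exp_apply_add {K H : Type*} [NormedAddCommGroup K] [NormedSpace 𝕜 K]
    [CompleteSpace K] [NormedAddCommGroup H] [NormedSpace 𝕜 H] [CompleteSpace H]
    (A : K →L[𝕜] V →L[𝕜] V) (ι : H →L[𝕜] V) (x : V) (hsurj : ∀ v : V, ∃ u y, A u x + ι y = v) :
    ∀ᶠ v in 𝓝 x, ∃ u y, exp (A u) (x + ι y) = v := by
  let Φ (p : K × H) : V := exp (A p.1) (x + ι p.2)
  have hexp : HasStrictFDerivAt (fun p : K × H => exp (A p.1))
      (A.comp (ContinuousLinearMap.fst 𝕜 K H)) 0 := by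
    have h0 : HasStrictFDerivAt (exp : (V →L[𝕜] V) → (V →L[𝕜] V))
        (1 : (V →L[𝕜] V) →L[𝕜] (V →L[𝕜] V)) ((A.comp (ContinuousLinearMap.fst 𝕜 K H)) 0) := by
      simpa using hasStrictFDerivAt_exp_zero (𝕂 := 𝕜) (𝔸 := V →L[𝕜] V)
    exact h0.comp 0 (A.comp (ContinuousLinearMap.fst 𝕜 K H)).hasStrictFDerivAt
  have hadd : HasStrictFDerivAt (fun p : K × H => x + ι p.2)
      (ι.comp (ContinuousLinearMap.snd 𝕜 K H)) 0 :=
    ((ι.comp (ContinuousLinearMap.snd 𝕜 K H)).hasStrictFDerivAt).const_add x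
  have hmap : map Φ (𝓝 0) = 𝓝 (Φ 0) := (hexp.clm_apply hadd).map_nhds_eq_of_surj (by
    refine LinearMap.range_eq_top.2 fun v => ?_
    obtain ⟨u, y, h⟩ := hsurj v
    exact ⟨(u, y), by simp [← h, exp_zero, add_comm]⟩)
  have hΦ : Φ 0 = x := by simp [Φ, exp_zero]
  rw [hΦ] at hmap
  rw [← hmap]
  exact eventually_map.2 (Eventually.of_forall fun p => ⟨p.1, p.2, rfl⟩)

end Exponential

section Adjoint

open LieAlgebra LieSubalgebra

variable {K L : Type*} [Field K] [LieRing L] [LieAlgebra K L]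

/-- The bracket `U × W → W`, for a subspace `U` that maps `W` into itself. -/
def adRestrict {U W : Submodule K L} (hUW : ∀ u ∈ U, ∀ w ∈ W, ⁅u, w⁆ ∈ W) :
    U →ₗ[K] Module.End K W where
  toFun u := (ad K L u).restrict (hUW u u.2)
  map_add' u v := by ext w; exact add_lie (u : L) (v : L) (w : L)
  map_smul' c u := by ext w; exact smul_lie c (u : L) (w : L)

lemma map_ad_pow_apply {L' : Type*} [LieRing L'] [LieAlgebra K L'] (φ : L →ₗ⁅K⁆ L') (x y : L)
    (n : ℕ) : φ ((ad K L x ^ n) y) = (ad K L' (φ x) ^ n) (φ y) := by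
  induction n with
  | zero => rfl
  | succ n ih =>
    rw [pow_succ', pow_succ', Module.End.mul_apply, Module.End.mul_apply, ad_apply, LieHom.map_lie,
      ih, ad_apply]

lemma map_mem_engel_map_iff (g : L ≃ₗ⁅K⁆ L) (x y : L) : g y ∈ engel K (g x) ↔ y ∈ engel K x := by
  have h (n : ℕ) : (ad K L (g x) ^ n) (g y) = g ((ad K L x ^ n) y) :=
    (map_ad_pow_apply g.toLieHom x y n).symm
  simp [mem_engel_iff, h]

lemma finrank_engel_map (g : L ≃ₗ⁅K⁆ L) (x : L) :
    Module.finrank K (engel K (g x)) = Module.finrank K (engel K x) := by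
  have hmap : (engel K x).toSubmodule.map (g.toLinearEquiv : L →ₗ[K] L) =
      (engel K (g x)).toSubmodule := by
    ext y
    obtain ⟨z, rfl⟩ := g.toLinearEquiv.surjective y
    exact g.injective.mem_set_image.trans (map_mem_engel_map_iff g x z).symm
  exact (LinearEquiv.finrank_eq ((g.toLinearEquiv.submoduleMap _).trans (.ofEq _ _ hmap))).symm

lemma mem_engel_of_lie_eq_zero {x y : L} (h : ⁅x, y⁆ = 0) : y ∈ engel K x :=
  (mem_engel_iff K x y).2 ⟨1, by simpa using h⟩

variable [FiniteDimensional K L]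

lemma exists_lie_add_engel_eq (x v : L) : ∃ u : L, ∃ y ∈ engel K x, ⁅u, x⁆ + y = v := by
  have h := LinearMap.isCompl_iSup_ker_pow_iInf_range_pow (ad K L x)
  obtain ⟨y, hy, w, hw, rfl⟩ := Submodule.mem_sup.1 (h.sup_eq_top.ge (Submodule.mem_top (x := v)))
  obtain ⟨u, hu⟩ := (Submodule.mem_iInf _).1 hw 1
  obtain ⟨n, hn⟩ := (Submodule.mem_iSup_of_directed _
    (ad K L x).iterateKer.monotone.directed_le).1 hy
  refine ⟨-u, y, (mem_engel_iff K x y).2 ⟨n, hn⟩, ?_⟩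
  rw [neg_lie, lie_skew, add_comm, ← hu, pow_one, ad_apply]

lemma engel_le_engel_of_forall_finrank_le [Infinite K] {x : L}
    (hmin : ∀ z ∈ engel K x, engel K z ≤ engel K x →
      Module.finrank K (engel K x) ≤ Module.finrank K (engel K z)) {y : L} (hy : y ∈ engel K x) :
    engel K x ≤ engel K y := by
  refine engel_isBot_of_isMin
    (Cardinal.natCast_le_aleph0.trans (Cardinal.infinite_iff.1 inferInstance)) (engel K x)
    ⟨engel K x, x, self_mem_engel K x, rfl⟩ le_rfl ?_ ⟨_, y, hy, rfl⟩
  rintro ⟨_, z, hz, rfl⟩ (hzx : engel K z ≤ engel K x)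
  exact (toSubmodule_injective (Submodule.eq_of_le_of_finrank_le hzx (hmin z hz hzx))).ge

lemma engel_le_engel_of_finrank_eq_rank [Infinite K] {x : L}
    (hx : Module.finrank K (engel K x) = rank K L) {y : L} (hy : y ∈ engel K x) :
    engel K x ≤ engel K y :=
  engel_le_engel_of_forall_finrank_le
    (fun z _ _ => hx.trans_le (rank_le_finrank_engel K z)) hy

lemma charpoly_ad_coeff_rank_ne_zero_iff (x : L) :
    ((ad K L : L →ₗ[K] Module.End K L) x).charpoly.coeff (rank K L) ≠ 0 ↔
      Module.finrank K (engel K x) = rank K L := by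
  rw [← isRegular_iff_finrank_engel_eq_rank, isRegular_def]
  rfl

end Adjoint

section InnerAutomorphism

open Filter Topology LieAlgebra LieSubalgebra

/-- A norm on a finite-dimensional complex vector space, given by the coordinates with respect to
some basis. It makes the analytic theory of the exponential available. -/
noncomputable abbrev coordNorm (M : Type*) [AddCommGroup M] [Module ℂ M] [FiniteDimensional ℂ M] :
    NormedAddCommGroup M :=
  .induced M _ (Module.finBasis ℂ M).equivFun (Module.finBasis ℂ M).equivFun.injective

noncomputable local instance (M : Type*) [AddCommGroup M] [Module ℂ M]
    [FiniteDimensional ℂ M] : NormedAddCommGroup M := coordNorm M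

noncomputable local instance (M : Type*) [AddCommGroup M] [Module ℂ M]
    [FiniteDimensional ℂ M] : NormedSpace ℂ M :=
  .induced ℂ M _ (Module.finBasis ℂ M).equivFun

local instance (M : Type*) [AddCommGroup M] [Module ℂ M]
    [FiniteDimensional ℂ M] : CompleteSpace M := FiniteDimensional.complete ℂ M

variable {L : Type*} [LieRing L] [LieAlgebra ℂ L] [FiniteDimensional ℂ L]

/-- The adjoint representation as a continuous bilinear map, for the norm `coordNorm`. -/
noncomputable def adCLM : L →L[ℂ] L →L[ℂ] L :=
  (LinearMap.toContinuousLinearMap.toLinearMap ∘ₗ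
    (ad ℂ L : L →ₗ[ℂ] Module.End ℂ L)).toContinuousLinearMap

@[simp]
lemma adCLM_apply (u v : L) : adCLM u v = ⁅u, v⁆ := rfl

/-- The inner automorphism `exp (ad u)`. -/
noncomputable def lieExp (u : L) : L ≃ₗ⁅ℂ⁆ L where
  __ := (NormedSpace.exp (adCLM u)).toLinearMap
  map_lie' := exp_apply_bilinear adCLM (adCLM u) (leibniz_lie u) _ _
  invFun := (NormedSpace.exp (-adCLM u) : L →L[ℂ] L)
  left_inv := exp_neg_apply_exp_apply (adCLM u)
  right_inv v := by simpa using exp_neg_apply_exp_apply (-adCLM u) v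

lemma lieExp_apply_eq_sum (u : L) {v : L} {n : ℕ} (h : (adCLM u ^ n) v = 0) :
    lieExp u v = ∑ k ∈ Finset.range n, ((k.factorial : ℂ)⁻¹) • (adCLM u ^ k) v :=
  exp_apply_eq_sum (adCLM u) h

lemma lieExp_apply_of_lie_lie_lie_eq_zero {u v : L} (h : ⁅u, ⁅u, ⁅u, v⁆⁆⁆ = 0) :
    lieExp u v = v + ⁅u, v⁆ + (2 : ℂ)⁻¹ • ⁅u, ⁅u, v⁆⁆ := by
  rw [lieExp_apply_eq_sum u (n := 3) (by simpa [pow_succ] using h)]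
  simp [Finset.sum_range_succ]

lemma lieExp_apply_of_lie_lie_eq_zero {u v : L} (h : ⁅u, ⁅u, v⁆⁆ = 0) :
    lieExp u v = v + ⁅u, v⁆ := by
  rw [lieExp_apply_of_lie_lie_lie_eq_zero (by rw [h, lie_zero]), h, smul_zero, add_zero]

lemma lieExp_apply_of_lie_eq_zero {u v : L} (h : ⁅u, v⁆ = 0) : lieExp u v = v := by
  rw [lieExp_apply_of_lie_lie_eq_zero (by rw [h, lie_zero]), h, add_zero]

/-- The product `exp (ad E) exp (-ad F) exp (ad E)` acts on `h` as the reflection in the root of the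
`sl₂`-triple `(E, H, F)`. -/
lemma exists_lieEquiv_reflection {E H F h : L} {c : ℂ} (hEF : ⁅E, F⁆ = H)
    (hHE : ⁅H, E⁆ = (2 : ℂ) • E) (hHF : ⁅H, F⁆ = -(2 : ℂ) • F) (hhE : ⁅h, E⁆ = c • E)
    (hhF : ⁅h, F⁆ = -c • F) : ∃ g : L ≃ₗ⁅ℂ⁆ L, g h = h - c • H := by
  have hEh : ⁅E, h⁆ = -c • E := by rw [← lie_skew, hhE, neg_smul]
  have hEH : ⁅E, H⁆ = -(2 : ℂ) • E := by rw [← lie_skew, hHE, neg_smul]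
  have hFh : ⁅-F, h⁆ = -c • F := by rw [neg_lie, lie_skew, hhF]
  have hFH : ⁅-F, H⁆ = -(2 : ℂ) • F := by rw [neg_lie, lie_skew, hHF]
  have hFE : ⁅-F, E⁆ = H := by rw [neg_lie, lie_skew, hEF]
  have expE_h : lieExp E h = h - c • E := by
    rw [lieExp_apply_of_lie_lie_eq_zero (by simp [hEh]), hEh, neg_smul, sub_eq_add_neg]
  have expE_H : lieExp E H = H - (2 : ℂ) • E := by
    rw [lieExp_apply_of_lie_lie_eq_zero (by simp [hEH]), hEH, neg_smul, sub_eq_add_neg]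
  have expE_E : lieExp E E = E := lieExp_apply_of_lie_eq_zero (lie_self E)
  have expF_h : lieExp (-F) h = h - c • F := by
    rw [lieExp_apply_of_lie_lie_eq_zero (by simp [hFh]), hFh, neg_smul, sub_eq_add_neg]
  have expF_E : lieExp (-F) E = E + H - F := by
    rw [lieExp_apply_of_lie_lie_lie_eq_zero (by simp [hFE, hFH]), hFE, hFH]
    module
  refine ⟨((lieExp E).trans (lieExp (-F))).trans (lieExp E), ?_⟩
  calc lieExp E (lieExp (-F) (lieExp E h))
      = lieExp E (h - c • E - c • H) := by
        rw [expE_h, map_sub, map_smul, expF_h, expF_E]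
        congr 1
        module
    _ = h - c • H := by
        rw [map_sub, map_sub, map_smul, map_smul, expE_h, expE_H, expE_E]
        module

lemma eventually_exists_lieEquiv_engel {x : L} (hx : ∀ y ∈ engel ℂ x, engel ℂ x ≤ engel ℂ y) :
    ∀ᶠ v in 𝓝 x, ∃ (g : L ≃ₗ⁅ℂ⁆ L) (y : L), v = g y ∧ engel ℂ x ≤ engel ℂ y := by
  have hsurj (v : L) : ∃ (u : L) (y : engel ℂ x), ⁅u, x⁆ + (y : L) = v :=
    let ⟨u, y, hy, h⟩ := exists_lie_add_engel_eq x v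
    ⟨u, ⟨y, hy⟩, h⟩
  filter_upwards [eventually_exists_exp_apply_add adCLM
    (engel ℂ x).toSubmodule.subtype.toContinuousLinearMap x hsurj]
  rintro v ⟨u, y, h⟩
  exact ⟨lieExp u, x + y, h.symm, hx _ (add_mem (self_mem_engel ℂ x) y.2)⟩

lemma finrank_engel_eq_rank_of_le {x : L} (hx : ∀ y ∈ engel ℂ x, engel ℂ x ≤ engel ℂ y) :
    Module.finrank ℂ (engel ℂ x) = rank ℂ L := by
  obtain ⟨r, hr⟩ := exists_isRegular ℂ L
  rw [isRegular_iff_finrank_engel_eq_rank, ← charpoly_ad_coeff_rank_ne_zero_iff] at hr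
  obtain ⟨_, ⟨g, y, rfl, hy⟩, hz⟩ := exists_mem_nhds_charpoly_coeff_ne_zero
    (ad ℂ L : L →ₗ[ℂ] Module.End ℂ L) (rank ℂ L) hr (eventually_exists_lieEquiv_engel hx)
  rw [charpoly_ad_coeff_rank_ne_zero_iff, finrank_engel_map] at hz
  exact le_antisymm (hz ▸ Submodule.finrank_mono (s := (engel ℂ x).toSubmodule) hy)
    (rank_le_finrank_engel ℂ x)

lemma exists_lieEquiv_engel_eq {x y : L} (hx : Module.finrank ℂ (engel ℂ x) = rank ℂ L)
    (hy : Module.finrank ℂ (engel ℂ y) = rank ℂ L) :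
    ∃ g : L ≃ₗ⁅ℂ⁆ L, ∀ z, g z ∈ engel ℂ y ↔ z ∈ engel ℂ x := by
  refine rel_of_eventually_nhds (ad ℂ L : L →ₗ[ℂ] Module.End ℂ L) (rank ℂ L)
    (r := fun a b => ∃ g : L ≃ₗ⁅ℂ⁆ L, ∀ z, g z ∈ engel ℂ b ↔ z ∈ engel ℂ a) ?_ ?_ (fun a ha => ?_)
    ((charpoly_ad_coeff_rank_ne_zero_iff x).2 hx) ((charpoly_ad_coeff_rank_ne_zero_iff y).2 hy)
  · rintro a b ⟨g, hg⟩
    exact ⟨g.symm, fun z => by rw [← hg, LieEquiv.apply_symm_apply]⟩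
  · rintro a b c ⟨g, hg⟩ ⟨k, hk⟩
    exact ⟨g.trans k, fun z => by rw [LieEquiv.trans_apply, hk, hg]⟩
  · rw [charpoly_ad_coeff_rank_ne_zero_iff] at ha
    filter_upwards [eventually_exists_lieEquiv_engel
      fun _ => engel_le_engel_of_finrank_eq_rank ha]
    rintro _ ⟨g, y, rfl, hle⟩ hb
    rw [charpoly_ad_coeff_rank_ne_zero_iff, finrank_engel_map] at hb
    have heq : engel ℂ a = engel ℂ y :=
      toSubmodule_injective (Submodule.eq_of_le_of_finrank_eq hle (ha.trans hb.symm))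
    exact ⟨g, fun z => by rw [map_mem_engel_map_iff, heq]⟩

lemma exists_mem_engel_finrank_eq_rank {h : L} (hh : ∀ y ∈ engel ℂ h, ⁅h, y⁆ = 0) :
    ∃ x : L, Module.finrank ℂ (engel ℂ x) = rank ℂ L ∧ h ∈ engel ℂ x := by
  obtain ⟨x, ⟨hxh, hle⟩, hmin⟩ := exists_minimalFor_of_wellFoundedLT
    (fun x => x ∈ engel ℂ h ∧ engel ℂ x ≤ engel ℂ h) (fun x => Module.finrank ℂ (engel ℂ x))
    ⟨h, self_mem_engel ℂ h, le_rfl⟩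
  refine ⟨x, finrank_engel_eq_rank_of_le fun y => engel_le_engel_of_forall_finrank_le ?_,
    mem_engel_of_lie_eq_zero (by rw [← lie_skew, hh x hxh, neg_zero])⟩
  exact fun z hz hzx => hmin ⟨hle hz, hzx.trans hle⟩
    (Submodule.finrank_mono (s := (engel ℂ z).toSubmodule) hzx)

lemma eventually_exists_lieExp_eq {K W : Submodule ℂ L} (hKW : ∀ u ∈ K, ∀ w ∈ W, ⁅u, w⁆ ∈ W)
    {a : W} (ha : Function.Surjective ((adRestrict hKW).flip a)) :
    ∀ᶠ b : W in 𝓝 a, ∃ u ∈ K, lieExp u (a : L) = b := by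
  let A : K →L[ℂ] W →L[ℂ] W :=
    (LinearMap.toContinuousLinearMap.toLinearMap ∘ₗ adRestrict hKW).toContinuousLinearMap
  filter_upwards [eventually_exists_exp_apply_add A (0 : W →L[ℂ] W) a fun v =>
    let ⟨u, hu⟩ := ha v
    ⟨u, 0, (add_zero _).trans hu⟩]
  rintro b ⟨u, y, hu⟩
  refine ⟨u, u.2, ?_⟩
  rw [← hu, zero_apply, add_zero]
  exact (map_exp_apply W.subtype.toContinuousLinearMap (A u) (adCLM (u : L))
    (fun _ => rfl) a).symm

lemma exists_lieEquiv_of_surjective {K W : Submodule ℂ L} (hKW : ∀ u ∈ K, ∀ w ∈ W, ⁅u, w⁆ ∈ W)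
    (hdim : Module.finrank ℂ K = Module.finrank ℂ W) {x y : L} (hx : x ∈ W) (hy : y ∈ W)
    (hx' : ∀ w ∈ W, ∃ u ∈ K, ⁅u, x⁆ = w) (hy' : ∀ w ∈ W, ∃ u ∈ K, ⁅u, y⁆ = w) :
    ∃ g : L ≃ₗ⁅ℂ⁆ L, g x = y ∧ ∀ h, (∀ u ∈ K, ⁅u, h⁆ = 0) → g h = h := by
  let θ : W ≃ₗ[ℂ] K := LinearEquiv.ofFinrankEq W K hdim.symm
  let φ : W →ₗ[ℂ] Module.End ℂ W := (LinearMap.lcomp ℂ W θ.toLinearMap) ∘ₗ (adRestrict hKW).flip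
  have hφ (a : W) : (φ a).charpoly.coeff 0 ≠ 0 ↔ Function.Surjective ((adRestrict hKW).flip a) :=
    (charpoly_coeff_zero_ne_zero_iff_surjective _).trans
      (θ.surjective.of_comp_iff ((adRestrict hKW).flip a))
  have hsurj {a : L} (ha : a ∈ W) (h : ∀ w ∈ W, ∃ u ∈ K, ⁅u, a⁆ = w) :
      (φ ⟨a, ha⟩).charpoly.coeff 0 ≠ 0 :=
    (hφ _).2 fun w =>
      let ⟨u, hu, huw⟩ := h w w.2
      ⟨⟨u, hu⟩, Subtype.ext huw⟩
  refine rel_of_eventually_nhds φ 0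
    (r := fun a b => ∃ g : L ≃ₗ⁅ℂ⁆ L, g a = b ∧ ∀ h, (∀ u ∈ K, ⁅u, h⁆ = 0) → g h = h)
    ?_ ?_ (fun a ha => ?_) (hsurj hx hx') (hsurj hy hy')
  · rintro a b ⟨g, hg, hfix⟩
    exact ⟨g.symm, g.symm_apply_eq.2 hg.symm, fun h hh => g.symm_apply_eq.2 (hfix h hh).symm⟩
  · rintro a b c ⟨g, hg, hgfix⟩ ⟨k, hk, hkfix⟩
    exact ⟨g.trans k, by rw [LieEquiv.trans_apply, hg, hk],
      fun h hh => by rw [LieEquiv.trans_apply, hgfix h hh, hkfix h hh]⟩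
  · filter_upwards [eventually_exists_lieExp_eq hKW ((hφ a).1 ha)]
    rintro b ⟨u, hu, hub⟩ -
    exact ⟨lieExp u, hub, fun h hh => lieExp_apply_of_lie_eq_zero (hh u hu)⟩

end InnerAutomorphism

section Sl2

open LieAlgebra Module

variable {K L : Type*} [Field K] [LieRing L] [LieAlgebra K L]

lemma lie_lie_eq_add_smul {h x y : L} {a b : K} (hx : ⁅h, x⁆ = a • x) (hy : ⁅h, y⁆ = b • y) :
    ⁅h, ⁅x, y⁆⁆ = (a + b) • ⁅x, y⁆ := by
  rw [leibniz_lie, hx, hy, smul_lie, lie_smul, add_smul]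

lemma lie_ad_pow_eq_smul {h x y : L} {a b : K} (hx : ⁅h, x⁆ = a • x) (hy : ⁅h, y⁆ = b • y)
    (k : ℕ) : ⁅h, (ad K L x ^ k) y⁆ = (b + k * a) • (ad K L x ^ k) y := by
  induction k with
  | zero => simpa using hy
  | succ k ih =>
    rw [pow_succ', End.mul_apply, ad_apply, lie_lie_eq_add_smul hx ih]
    push_cast
    ring_nf

lemma lie_eq_zero_of_lie_e_eq_zero {e h f z : L} (ht : IsSl2Triple h e f) (hz : ⁅e, z⁆ = 0) :
    ⁅e, ⁅h, z⁆⁆ = 0 := by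
  rw [leibniz_lie, hz, lie_zero, add_zero, ← lie_skew e h, ht.lie_h_e_nsmul, neg_lie, nsmul_lie, hz,
    smul_zero, neg_zero]

variable [CharZero K] [FiniteDimensional K L]

lemma exists_ad_pow_apply_eq_zero {h x y : L} {a b : K} (ha : a ≠ 0) (hx : ⁅h, x⁆ = a • x)
    (hy : ⁅h, y⁆ = b • y) : ∃ k : ℕ, (ad K L x ^ k) y = 0 := by
  by_contra! hne
  refine Set.infinite_of_injective_forall_mem (f := fun k : ℕ => b + k * a) (fun _ _ hkl => ?_)
    (fun k => ?_) (End.finite_hasEigenvalue (ad K L h))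
  · simpa [ha] using hkl
  · exact End.hasEigenvalue_of_hasEigenvector
      ⟨End.mem_eigenspace_iff.2 (lie_ad_pow_eq_smul hx hy k), hne k⟩

variable {e h f : L} (ht : IsSl2Triple h e f)

include ht

lemma exists_nat_of_lie_eq_smul {x : L} (hx : x ≠ 0) {c : K} (hhx : ⁅h, x⁆ = c • x)
    (hex : ⁅e, x⁆ = 0) : ∃ n : ℕ, c = n :=
  IsSl2Triple.HasPrimitiveVectorWith.exists_nat (t := ht) ⟨hx, hhx, hex⟩

lemma exists_int_of_lie_eq_smul {x : L} (hx : x ≠ 0) {c : K} (hhx : ⁅h, x⁆ = c • x) :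
    ∃ n : ℤ, c = n := by
  obtain ⟨k, hk, hk'⟩ := Nat.exists_not_and_succ_of_not_zero_of_exists
    (p := fun k => (ad K L e ^ k) x = 0) hx
    (exists_ad_pow_apply_eq_zero two_ne_zero (ht.lie_h_e_smul K) hhx)
  obtain ⟨n, hn⟩ := exists_nat_of_lie_eq_smul ht hk
    (lie_ad_pow_eq_smul (ht.lie_h_e_smul K) hhx k) (by rwa [pow_succ'] at hk')
  exact ⟨n - k * 2, by push_cast; linear_combination hn⟩

lemma eq_zero_of_lie_h_eq_neg_two_smul {x : L} (hhx : ⁅h, x⁆ = (-2 : K) • x)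
    (hex : ⁅e, x⁆ = 0) : x = 0 := by
  by_contra hx
  obtain ⟨n, hn⟩ := exists_nat_of_lie_eq_smul ht hx hhx hex
  have : ((n + 2 : ℕ) : K) = 0 := by
    push_cast
    linear_combination -hn
  norm_cast at this

/-- The lowering operators satisfy `e f^{k+1} y = -(k + 1) (k + 2) f^k y`, so no `f^k y` is
zero. -/
lemma eq_zero_of_lie_e_eq_of_lie_h_eq_neg_two_smul {x y : L} (hhx : ⁅h, x⁆ = 0) (hex : ⁅e, x⁆ = 0)
    (hey : ⁅e, y⁆ = x) (hy : ⁅h, y⁆ = (-2 : K) • y) : x = 0 := by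
  by_contra hx
  have hfx : ⁅f, x⁆ = 0 := by
    have P : IsSl2Triple.HasPrimitiveVectorWith ht x (0 : K) := ⟨hx, by simpa using hhx, hex⟩
    simpa using P.pow_toEnd_f_eq_zero_of_eq_nat (n := 0) (by simp)
  have hhf : ⁅h, f⁆ = (-2 : K) • f := by rw [ht.lie_lie_smul_f K, neg_smul]
  have he (k : ℕ) :
      ⁅e, (ad K L f ^ (k + 1)) y⁆ = (-((k + 1) * (k + 2)) : K) • (ad K L f ^ k) y := by
    induction k with
    | zero => simp [leibniz_lie e, ht.lie_e_f, hey, hfx, hy]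
    | succ k ih =>
      rw [pow_succ', End.mul_apply, ad_apply, leibniz_lie, ht.lie_e_f, ih, lie_smul,
        lie_ad_pow_eq_smul hhf hy, ← ad_apply (R := K), ← End.mul_apply, ← pow_succ', ← add_smul]
      push_cast
      ring_nf
  have hy0 : y ≠ 0 := by
    rintro rfl
    exact hx (by rw [← hey, lie_zero])
  obtain ⟨k, hk, hk'⟩ := Nat.exists_not_and_succ_of_not_zero_of_exists
    (p := fun k => (ad K L f ^ k) y = 0) hy0 (exists_ad_pow_apply_eq_zero (by simp) hhf hy)
  have hzero := he k
  rw [hk', lie_zero, eq_comm, smul_eq_zero_iff_left hk, neg_eq_zero, mul_eq_zero] at hzero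
  norm_cast at hzero

lemma exists_lie_e_eq_and_lie_h_eq {x y : L} (hhx : ⁅h, x⁆ = 0) (hey : ⁅e, y⁆ = x) :
    ∃ z : L, ⁅e, z⁆ = x ∧ ⁅h, z⁆ = (-2 : K) • z := by
  let T : End K L := ad K L h + (2 : K) • 1
  have hT (z : L) : T z = ⁅h, z⁆ + (2 : K) • z := rfl
  have hTker : ∀ z ∈ LinearMap.ker (ad K L e), T z ∈ LinearMap.ker (ad K L e) := fun z hz =>
    add_mem (lie_eq_zero_of_lie_e_eq_zero ht hz) (Submodule.smul_mem _ _ hz)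
  have hinj : Function.Injective (T.restrict hTker) := by
    refine (injective_iff_map_eq_zero _).2 fun ⟨z, hz⟩ h0 =>
      Subtype.ext (eq_zero_of_lie_h_eq_neg_two_smul (K := K) ht ?_ hz)
    rw [neg_smul]
    exact eq_neg_of_add_eq_zero_left (congrArg Subtype.val h0)
  have hTy : T y ∈ LinearMap.ker (ad K L e) := by
    rw [LinearMap.mem_ker, ad_apply, hT, lie_add, lie_smul, leibniz_lie, hey, hhx, ← lie_skew e h,
      ht.lie_h_e_smul K, neg_lie, smul_lie, hey, add_zero, neg_add_cancel]
  obtain ⟨⟨w, hw⟩, hwy⟩ := LinearMap.surjective_of_injective hinj ⟨T y, hTy⟩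
  refine ⟨y - w, by rw [lie_sub, hey, show ⁅e, w⁆ = 0 from hw, sub_zero], ?_⟩
  rw [neg_smul]
  refine eq_neg_of_add_eq_zero_left ?_
  rw [← hT, map_sub, sub_eq_zero]
  exact (congrArg Subtype.val hwy).symm

lemma finrank_eigenspace_two_le_zero :
    finrank K ((ad K L h).eigenspace 2) ≤ finrank K ((ad K L h).eigenspace 0) := by
  have hmaps : ∀ u ∈ (ad K L h).eigenspace 2, ad K L f u ∈ (ad K L h).eigenspace 0 := fun u hu =>
    End.mem_eigenspace_iff.2 (by
      simpa using lie_lie_eq_add_smul (a := -2) (by rw [ht.lie_lie_smul_f K, neg_smul])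
        (End.mem_eigenspace_iff.1 hu))
  refine LinearMap.finrank_le_finrank_of_injective (f := (ad K L f).restrict hmaps)
    ((injective_iff_map_eq_zero _).2 fun ⟨u, hu⟩ h0 => Subtype.ext ?_)
  rw [End.mem_eigenspace_iff, ad_apply] at hu
  exact eq_zero_of_lie_h_eq_neg_two_smul (K := K) ht.symm (by rw [neg_lie, hu, neg_smul])
    (congrArg Subtype.val h0)

end Sl2

section Jordan

open LieAlgebra Module

lemma exists_apply_eq_of_sub_smul_one_pow_apply_eq_zero {K V : Type*} [Field K] [AddCommGroup V]
    [Module K V] (T : End K V) {c : K} (hc : c ≠ 0) {n : ℕ} {z : V}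
    (hz : ((T - c • (1 : End K V)) ^ n) z = 0) : ∃ w, T w = z := by
  induction n generalizing z with
  | zero => exact ⟨0, by simpa using hz.symm⟩
  | succ n ih =>
    obtain ⟨w, hw⟩ := ih (z := (T - c • (1 : End K V)) z) (by rwa [pow_succ, End.mul_apply] at hz)
    refine ⟨c⁻¹ • (z - w), ?_⟩
    rw [map_smul, map_sub, hw]
    simp [smul_smul, hc]

variable {K L : Type*} [Field K] [LieRing L] [LieAlgebra K L] [FiniteDimensional K L]

lemma apply_lie_of_forall_mem_maxGenEigenspace [IsAlgClosed K] {x : L} {S : End K L}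
    (hS : ∀ c, ∀ y ∈ (ad K L x).maxGenEigenspace c, S y = c • y) (y z : L) :
    S ⁅y, z⁆ = ⁅S y, z⁆ + ⁅y, S z⁆ := by
  have htop (y : L) : y ∈ ⨆ c, (ad K L x).maxGenEigenspace c := by
    rw [End.iSup_maxGenEigenspace_eq_top]
    trivial
  induction htop y using Submodule.iSup_induction' with
  | mem a y hy =>
    induction htop z using Submodule.iSup_induction' with
    | mem b z hz =>
      have hyz : ⁅y, z⁆ ∈ (ad K L x).maxGenEigenspace (a + b) :=
        LieModule.lie_mem_maxGenEigenspace_toEnd hy hz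
      rw [hS a y hy, hS b z hz, hS _ _ hyz, smul_lie, lie_smul, ← add_smul]
    | zero => simp
    | add _ _ _ _ h h' => simp only [lie_add, map_add, h, h']; abel
  | zero => simp
  | add _ _ _ _ h h' => simp only [add_lie, map_add, h, h']; abel

/-- The abstract Jordan decomposition: the semisimple part of `ad x` is a derivation, hence
inner. -/
lemma exists_ad_isSemisimple_isNilpotent_sub [CharZero K] [IsAlgClosed K] [IsKilling K L]
    (x : L) :
    ∃ s : L, (ad K L s).IsSemisimple ∧ IsNilpotent (ad K L x - ad K L s) ∧
      ∀ (y : L) (c : K), ⁅x, y⁆ = c • y → ⁅s, y⁆ = c • y := by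
  obtain ⟨N, -, S, hS₀, hN, hS, hSN⟩ := (ad K L x).exists_isNilpotent_isSemisimple
  replace hS₀ : Commute (ad K L x) S := Algebra.commute_of_mem_adjoin_self hS₀
  rw [eq_sub_of_add_eq hSN.symm] at hN
  have hSeig (c : K) (y : L) (hy : y ∈ (ad K L x).maxGenEigenspace c) : S y = c • y := by
    rw [End.maxGenEigenspace_eq] at hy
    rw [End.apply_eq_of_mem_of_comm_of_isFinitelySemisimple_of_isNil hy hS₀
      hS.isFinitelySemisimple hN]
  have hder (y z : L) : S ⁅y, z⁆ = ⁅y, S z⁆ - ⁅z, S y⁆ := by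
    rw [apply_lie_of_forall_mem_maxGenEigenspace hSeig, ← lie_skew z, sub_neg_eq_add, add_comm]
  obtain ⟨s, hs⟩ := LieDerivation.IsKilling.exists_eq_ad (⟨S, hder⟩ : LieDerivation K L L)
  have hsS : ad K L s = S := by
    ext y
    rw [← LieDerivation.coe_ad_apply_eq_ad_apply, hs]
  refine ⟨s, hsS ▸ hS, hsS ▸ hN, fun y c hy => ?_⟩
  rw [← ad_apply (R := K), hsS]
  exact hSeig c y (End.eigenspace_le_maxGenEigenspace (End.mem_eigenspace_iff.2 hy))

lemma mem_range_ad_of_forall_killingForm_eq_zero [IsKilling K L] {e x : L}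
    (h : ∀ z : L, ⁅e, z⁆ = 0 → killingForm K L x z = 0) : ∃ y : L, ⁅e, y⁆ = x := by
  have hnondeg := IsKilling.killingForm_nondegenerate K L
  change x ∈ LinearMap.range (ad K L e)
  rw [← LinearMap.BilinForm.orthogonal_orthogonal hnondeg (LieModule.traceForm_isSymm K L L).isRefl
    (LinearMap.range (ad K L e)), LinearMap.BilinForm.mem_orthogonal_iff]
  intro z hz
  rw [LinearMap.BilinForm.mem_orthogonal_iff] at hz
  refine (LieModule.traceForm_comm K L L z x).trans (h z (hnondeg.1 _ fun y => ?_))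
  exact (LieModule.traceForm_apply_lie_apply' K L L e z y).trans
    (neg_eq_zero.2 ((LieModule.traceForm_comm K L L z _).trans (hz ⁅e, y⁆ ⟨y, rfl⟩)))

end Jordan

section Distinguished

open LieAlgebra Module

variable {L : Type*} [LieRing L] [LieAlgebra ℂ L] [FiniteDimensional ℂ L] [IsKilling ℂ L]
  {e h f : L}

lemma killingForm_eq_zero_of_isDistinguished (hdist : IsDistinguished L e) {x z : L}
    (hx : x ∈ LieSubalgebra.engel ℂ h) (hex : ⁅e, x⁆ = 0)
    (hz : z ∈ LieSubalgebra.engel ℂ h) (hez : ⁅e, z⁆ = 0) : killingForm ℂ L x z = 0 := by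
  let C : LieSubalgebra ℂ L := LieSubalgebra.engel ℂ h ⊓ centralizer L e
  have hC : LieModule.IsNilpotent C L := by
    rw [LieModule.isNilpotent_iff_forall' (R := ℂ)]
    rintro ⟨w, -, hw⟩
    obtain ⟨s, hss, hsn, hs⟩ := exists_ad_isSemisimple_isNilpotent_sub (K := ℂ) w
    have hs0 : s = 0 := hdist s (by simpa using hs e 0 ((show ⁅w, e⁆ = 0 from hw).trans
      (zero_smul ℂ e).symm)) hss
    rwa [hs0, map_zero, sub_zero] at hsn
  have hskew {y : L} (hy : ⁅e, y⁆ = 0) : ⁅y, e⁆ = 0 := by rw [← lie_skew, hy, neg_zero]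
  have htrace := LieModule.traceForm_eq_zero_of_isNilpotent ℂ C L
  exact LinearMap.congr_fun (LinearMap.congr_fun htrace ⟨x, hx, hskew hex⟩) ⟨z, hz, hskew hez⟩

variable (ht : IsSl2Triple h e f) (hdist : IsDistinguished L e)

include ht hdist

/-- On `ker (ad e)`, the nonzero generalized weight spaces of `h` are orthogonal to `x` by
invariance, and the zero one by nilpotency. -/
lemma killingForm_eq_zero_of_lie_e_eq_zero {x : L} (hhx : ⁅h, x⁆ = 0) (hex : ⁅e, x⁆ = 0) {z : L}
    (hz : ⁅e, z⁆ = 0) : killingForm ℂ L x z = 0 := by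
  have hker := Submodule.eq_iSup_inf_genEigenspace (f := ad ℂ L h)
    (p := LinearMap.ker (ad ℂ L e)) ⊤ (fun z hz => lie_eq_zero_of_lie_e_eq_zero ht hz)
    (End.iSup_maxGenEigenspace_eq_top _)
  suffices LinearMap.ker (ad ℂ L e) ≤ LinearMap.ker (killingForm ℂ L x) from this hz
  rw [hker]
  refine iSup_le fun μ z ⟨hez, hz⟩ => ?_
  obtain ⟨n, hn⟩ := (End.mem_maxGenEigenspace _ _ _).1 hz
  by_cases hμ : μ = 0
  · refine killingForm_eq_zero_of_isDistinguished hdist (mem_engel_of_lie_eq_zero hhx) hex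
      ((LieSubalgebra.mem_engel_iff ℂ h z).2 ⟨n, ?_⟩) hez
    simpa [hμ] using hn
  · obtain ⟨w, rfl⟩ := exists_apply_eq_of_sub_smul_one_pow_apply_eq_zero _ hμ hn
    refine (LieModule.traceForm_apply_lie_apply ℂ L L x h w).symm.trans ?_
    rw [← lie_skew, hhx, neg_zero, map_zero, LinearMap.zero_apply]

lemma eq_zero_of_lie_h_eq_zero_of_lie_e_eq_zero {x : L} (hhx : ⁅h, x⁆ = 0) (hex : ⁅e, x⁆ = 0) :
    x = 0 := by
  obtain ⟨y, hy⟩ := mem_range_ad_of_forall_killingForm_eq_zero (K := ℂ) fun z =>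
    killingForm_eq_zero_of_lie_e_eq_zero ht hdist hhx hex (z := z)
  obtain ⟨z, hz, hhz⟩ := exists_lie_e_eq_and_lie_h_eq (K := ℂ) ht hhx hy
  exact eq_zero_of_lie_e_eq_of_lie_h_eq_neg_two_smul ht hhx hex hz hhz

lemma isSemisimple_ad_h : (ad ℂ L h).IsSemisimple := by
  obtain ⟨s, hss, -, hs⟩ := exists_ad_isSemisimple_isNilpotent_sub (K := ℂ) h
  have hse : ⁅s, e⁆ = (2 : ℂ) • e := hs e 2 (ht.lie_h_e_smul ℂ)
  have hsh : ⁅s, h⁆ = 0 := by simpa using hs h 0 (by simp)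
  have hsub : h - s = 0 := by
    refine eq_zero_of_lie_h_eq_zero_of_lie_e_eq_zero ht hdist ?_ ?_
    · rw [lie_sub, lie_self, ← lie_skew, hsh, neg_zero, sub_zero]
    · rw [← lie_skew, sub_lie, hse, ht.lie_h_e_smul ℂ, sub_self, neg_zero]
  rwa [sub_eq_zero.1 hsub]

lemma lie_eq_zero_of_mem_engel {y : L} (hy : y ∈ LieSubalgebra.engel ℂ h) : ⁅h, y⁆ = 0 := by
  have hy' : y ∈ (ad ℂ L h).maxGenEigenspace 0 := by
    rw [End.mem_maxGenEigenspace]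
    simpa [LieSubalgebra.mem_engel_iff] using hy
  rwa [(isSemisimple_ad_h ht hdist).isFinitelySemisimple.maxGenEigenspace_eq_eigenspace,
    End.mem_eigenspace_iff, zero_smul] at hy'

lemma exists_injective_eigenspace_zero_two :
    ∃ φ : (ad ℂ L h).eigenspace 0 →ₗ[ℂ] (ad ℂ L h).eigenspace 2,
      Function.Injective φ ∧ ∀ u, (φ u : L) = ⁅e, (u : L)⁆ := by
  have hmaps : ∀ u ∈ (ad ℂ L h).eigenspace 0, ad ℂ L e u ∈ (ad ℂ L h).eigenspace 2 := fun u hu =>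
    End.mem_eigenspace_iff.2 (by
      simpa using lie_lie_eq_add_smul (ht.lie_h_e_smul ℂ) (End.mem_eigenspace_iff.1 hu))
  refine ⟨(ad ℂ L e).restrict hmaps, (injective_iff_map_eq_zero _).2 fun ⟨u, hu⟩ h0 => ?_,
    fun _ => rfl⟩
  rw [End.mem_eigenspace_iff, zero_smul] at hu
  exact Subtype.ext
    (eq_zero_of_lie_h_eq_zero_of_lie_e_eq_zero ht hdist hu (congrArg Subtype.val h0))

lemma finrank_eigenspace_zero_eq_two :
    finrank ℂ ((ad ℂ L h).eigenspace 0) = finrank ℂ ((ad ℂ L h).eigenspace 2) := by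
  obtain ⟨φ, hφ, -⟩ := exists_injective_eigenspace_zero_two ht hdist
  exact (LinearMap.finrank_le_finrank_of_injective hφ).antisymm (finrank_eigenspace_two_le_zero ht)

lemma exists_lie_e_eq_of_lie_h_eq_two_smul {w : L} (hw : ⁅h, w⁆ = (2 : ℂ) • w) :
    ∃ u : L, ⁅h, u⁆ = 0 ∧ ⁅u, e⁆ = w := by
  obtain ⟨φ, hφ, hφe⟩ := exists_injective_eigenspace_zero_two ht hdist
  obtain ⟨u, hu⟩ := (LinearMap.injective_iff_surjective_of_finrank_eq_finrank
    (finrank_eigenspace_zero_eq_two ht hdist)).1 hφ ⟨w, End.mem_eigenspace_iff.2 hw⟩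
  have hu0 : ⁅h, (u : L)⁆ = 0 := by simpa using End.mem_eigenspace_iff.1 u.2
  exact ⟨-u, by rw [lie_neg, hu0, neg_zero], by rw [neg_lie, lie_skew, ← hφe, hu]⟩

end Distinguished

noncomputable section

namespace F4

/-! ### Integer combinations -/

/-- `List.foldr`, which is compiled with an auxiliary construction for structural recursion that
makes it expensive for the kernel. -/
def fold {α β : Type} (f : α → β → β) (z : β) (l : List α) : β := l.rec z fun a _ r => f a r

/-- The test whether an integer is zero, in a form which is cheap for the kernel. -/
def isZero (c : ℤ) : Bool := c.rec (·.beq 0) fun _ => false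

lemma bif_beq {α : Type*} (m n : ℕ) (a b : α) :
    (bif m.beq n then a else b) = if m = n then a else b := by
  simp only [Bool.cond_eq_ite, Nat.beq_eq]

lemma bif_isZero {α : Type*} (c : ℤ) (a b : α) :
    (bif isZero c then a else b) = if c = 0 then a else b := by
  match c with
  | .ofNat n => exact (bif_beq n 0 a b).trans (if_congr Int.ofNat_eq_zero.symm rfl rfl)
  | .negSucc n => exact (if_neg (Int.negSucc_ne_zero n)).symm

/-- Formal integer combinations of vectors indexed by `ℕ`, as association lists. The functions on
them below are executed by the kernel. -/
abbrev Comb := List (ℕ × ℤ)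

/-- The value of a combination at a family of vectors. -/
def eval {M : Type*} [AddCommGroup M] (x : ℕ → M) (s : Comb) : M :=
  (s.map fun p => p.2 • x p.1).sum

/-- The combination `c • k + s`; no key is repeated and no coefficient is zero if this holds
for `s`. -/
def addTerm (k : ℕ) (c : ℤ) (s : Comb) : Comb :=
  s.rec (bif isZero c then [] else [(k, c)]) fun p s r =>
    bif k.beq p.1 then bif isZero (c + p.2) then s else (k, c + p.2) :: s else p :: r

/-- The normal form of a combination. -/
def collect (s : Comb) : Comb := fold (fun p r => addTerm p.1 p.2 r) [] s

/-- The test whether a combination is formally zero. -/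
def null (s : Comb) : Bool := (collect s).isEmpty

/-- The combination `a • s + r`. -/
def smulAdd (a : ℤ) (s r : Comb) : Comb := fold (fun p r => (p.1, a * p.2) :: r) r s

/-- The linear extension to combinations of a map on basis vectors. -/
def linExt (T : ℕ → Comb) (s : Comb) : Comb := fold (fun p r => smulAdd p.2 (T p.1) r) [] s

/-- The bilinear extension to combinations of a product of basis vectors. -/
def bilinExt (T : ℕ → ℕ → Comb) (s t : Comb) : Comb := linExt (fun i => linExt (T i) t) s

/-- The coefficient of a basis vector in a combination. -/
def coeff (s : Comb) (k : ℕ) : ℤ := fold (fun p r => bif p.1.beq k then p.2 + r else r) 0 s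

section Eval

variable {M N : Type*} [AddCommGroup M] [AddCommGroup N] (x : ℕ → M)

@[simp] lemma eval_nil : eval x [] = 0 := rfl

@[simp] lemma eval_cons (p : ℕ × ℤ) (s : Comb) : eval x (p :: s) = p.2 • x p.1 + eval x s := by
  simp only [eval, List.map_cons, List.sum_cons]

lemma eval_addTerm (k : ℕ) (c : ℤ) (s : Comb) :
    eval x (addTerm k c s) = c • x k + eval x s := by
  induction s with
  | nil =>
    change eval x (bif isZero c then [] else [(k, c)]) = _
    rw [bif_isZero]
    split_ifs with hc
    · rw [hc, zero_zsmul, zero_add]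
    · exact eval_cons x _ _
  | cons p s ih =>
    change eval x (bif k.beq p.1 then bif isZero (c + p.2) then s else (k, c + p.2) :: s
      else p :: addTerm k c s) = _
    rw [bif_beq, bif_isZero]
    split_ifs with hk hc
    · rw [eval_cons, ← hk, ← add_assoc, ← add_zsmul, hc, zero_zsmul, zero_add]
    · rw [eval_cons, eval_cons, ← hk, add_zsmul, add_assoc]
    · rw [eval_cons, eval_cons, ih, add_left_comm]

@[simp] lemma eval_collect (s : Comb) : eval x (collect s) = eval x s := by
  induction s with
  | nil => rfl
  | cons p s ih => rw [eval_cons, ← ih, ← eval_addTerm]; rfl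

lemma eval_eq_zero_of_null {s : Comb} (h : null s = true) : eval x s = 0 := by
  rw [← eval_collect, List.isEmpty_iff.1 h, eval_nil]

@[simp] lemma eval_smulAdd (a : ℤ) (s r : Comb) :
    eval x (smulAdd a s r) = a • eval x s + eval x r := by
  induction s with
  | nil => rw [eval_nil, smul_zero, zero_add]; rfl
  | cons p s ih => rw [eval_cons, smul_add, add_assoc, ← ih, ← mul_smul]; exact eval_cons x _ _

lemma eval_eq_of_null {c : ℤ} {s r : Comb} (h : null (smulAdd (-c) s r) = true) :
    eval x r = c • eval x s := by
  have := eval_eq_zero_of_null x h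
  rwa [eval_smulAdd, neg_smul, neg_add_eq_zero, eq_comm] at this

@[simp] lemma eval_linExt (T : ℕ → Comb) (s : Comb) :
    eval x (linExt T s) = eval (fun k => eval x (T k)) s := by
  induction s with
  | nil => rfl
  | cons p s ih => rw [eval_cons, ← ih, ← eval_smulAdd]; rfl

lemma map_eval {F : Type*} [FunLike F M N] [AddMonoidHomClass F M N] (φ : F) (s : Comb) :
    φ (eval x s) = eval (fun k => φ (x k)) s := by
  induction s with
  | nil => rw [eval_nil, eval_nil, map_zero]
  | cons p s ih => rw [eval_cons, eval_cons, map_add, map_zsmul, ih]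

lemma eval_mem {R : Type*} [Ring R] [Module R M] {x : ℕ → M} {S : Submodule R M}
    (hx : ∀ k, x k ∈ S) (s : Comb) : eval x s ∈ S :=
  S.toAddSubgroup.list_sum_mem <| List.forall_mem_map.2 fun _ _ =>
    S.toAddSubgroup.zsmul_mem (hx _) _

lemma eval_ite_eq_coeff {R : Type*} [Ring R] (s : Comb) (k : ℕ) :
    eval (fun j => if j = k then (1 : R) else 0) s = coeff s k := by
  induction s with
  | nil => exact Int.cast_zero.symm
  | cons p s ih =>
    change _ = ((bif p.1.beq k then p.2 + coeff s k else coeff s k : ℤ) : R)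
    rw [eval_cons, ih, bif_beq]
    split_ifs <;> simp

lemma coeff_collect (s : Comb) (k : ℕ) : coeff (collect s) k = coeff s k := by
  simpa only [eval_collect, Int.cast_id] using
    (eval_ite_eq_coeff (R := ℤ) (collect s) k).symm.trans
      ((eval_collect _ s).trans (eval_ite_eq_coeff s k))

variable {L : Type*} [LieRing L]

lemma lie_eval (x : ℕ → L) (y : L) (s : Comb) : ⁅y, eval x s⁆ = eval (fun k => ⁅y, x k⁆) s :=
  map_eval x (AddMonoidHom.mk' (fun z => ⁅y, z⁆) (lie_add y)) s

lemma eval_lie (x : ℕ → L) (y : L) (s : Comb) : ⁅eval x s, y⁆ = eval (fun k => ⁅x k, y⁆) s :=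
  map_eval x (AddMonoidHom.mk' (fun z => ⁅z, y⁆) fun a b => add_lie a b y) s

lemma lie_eval_eval {x : ℕ → L} {T : ℕ → ℕ → Comb} (hT : ∀ i j, ⁅x i, x j⁆ = eval x (T i j))
    (s t : Comb) : ⁅eval x s, eval x t⁆ = eval x (bilinExt T s t) := by
  rw [eval_lie, bilinExt, eval_linExt]
  simp only [lie_eval, hT, eval_linExt]

end Eval

/-! ### The 27-dimensional representation -/

/-- The matrix unit of size `27` with row `n / 27` and column `n % 27`. -/
def matrixUnit (n : ℕ) : Module.End ℂ (ℕ →₀ ℂ) :=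
  Finsupp.lsingle (n / 27) ∘ₗ Finsupp.lapply (n % 27)

lemma matrixUnit_mul (m n : ℕ) : matrixUnit m * matrixUnit n =
    if m % 27 = n / 27 then matrixUnit (27 * (m / 27) + n % 27) else 0 := by
  have h1 : (27 * (m / 27) + n % 27) / 27 = m / 27 := by omega
  have h2 : (27 * (m / 27) + n % 27) % 27 = n % 27 := by omega
  ext v
  split_ifs with h
  · simp [matrixUnit, h1, h2, h]
  · simp [matrixUnit, Ne.symm h]

/-- `a • (s * t) + r`, for combinations of matrix units. -/
def mulAdd (a : ℤ) (s t r : Comb) : Comb :=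
  fold (fun p r => fold (fun q r => bif (p.1 % 27).beq (q.1 / 27) then
    (27 * (p.1 / 27) + q.1 % 27, a * (p.2 * q.2)) :: r else r) r t) r s

/-- The commutator of combinations of matrix units. -/
def commutator (s t : Comb) : Comb := mulAdd 1 s t (mulAdd (-1) t s [])

lemma eval_fold_mul_term (a : ℤ) (p : ℕ × ℤ) (t r : Comb) :
    eval matrixUnit (fold (fun q r => bif (p.1 % 27).beq (q.1 / 27) then
      (27 * (p.1 / 27) + q.1 % 27, a * (p.2 * q.2)) :: r else r) r t) =
      a • (p.2 • matrixUnit p.1 * eval matrixUnit t) + eval matrixUnit r := by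
  induction t with
  | nil => rw [eval_nil, mul_zero, smul_zero, zero_add]; rfl
  | cons q t ih =>
    rw [eval_cons, mul_add, mul_smul_comm, smul_mul_assoc, matrixUnit_mul, smul_add, add_assoc,
      ← ih]
    change eval matrixUnit (bif (p.1 % 27).beq (q.1 / 27) then _ else _) = _
    rw [bif_beq]
    split_ifs
    · rw [eval_cons, mul_comm p.2, mul_smul, mul_smul]; rfl
    · simp only [smul_zero, zero_add]; rfl

lemma eval_mulAdd (a : ℤ) (s t r : Comb) : eval matrixUnit (mulAdd a s t r) =
    a • (eval matrixUnit s * eval matrixUnit t) + eval matrixUnit r := by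
  induction s with
  | nil => rw [eval_nil, zero_mul, smul_zero, zero_add]; rfl
  | cons p s ih =>
    rw [eval_cons, add_mul, smul_add, add_assoc, ← ih]
    exact eval_fold_mul_term a p t _

lemma eval_commutator (s t : Comb) :
    eval matrixUnit (commutator s t) = ⁅eval matrixUnit s, eval matrixUnit t⁆ := by
  rw [commutator, eval_mulAdd, eval_mulAdd, Ring.lie_def, eval_nil, add_zero, one_smul,
    neg_one_zsmul, sub_eq_add_neg]

/-- The simple coroots (members `0`–`3`) and root vectors for the positive roots, ordered by
height (members `4`–`27`), in the 27-dimensional representation of the Lie algebra of type `F₄`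
which is the restriction of a minuscule representation of type `E₆`. -/
def positiveMatrices : List Comb :=
    [[(0, 1), (28, -1), (140, 1), (168, 1), (196, -1), (224, 1), (252, -1), (280, 2), (308, -1),
    (420, -2), (448, 1), (476, -1), (504, 1), (532, -1), (560, 1), (588, -1), (700, 1), (728,
    -1)],
     [(28, 1), (56, -1), (84, 1), (112, 1), (140, -1), (168, -1), (224, 1), (280, -1), (308, 2),
    (420, 1), (448, -2), (476, -1), (532, 1), (588, 1), (616, -1), (644, -1), (672, 1), (700,
    -1)],
     [(56, 1), (84, -1), (168, 1), (224, -1), (252, 1), (308, -1), (448, 1), (476, 1), (504, -1),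
    (532, -1), (644, 1), (672, -1)],
     [(84, 1), (112, -1), (140, 1), (168, -1), (196, 1), (252, -1), (504, 1), (532, 1), (560, -1),
    (588, -1), (616, 1), (644, -1)],
     [(1, 1), (142, 1), (171, 1), (227, 1), (282, 1), (283, 1), (339, 1), (366, 1), (449, 1),
    (505, 1), (561, 1), (701, 1)],
     [(29, 1), (86, 1), (114, 1), (226, 1), (310, 1), (311, 1), (367, 1), (394, 1), (422, 1),
    (535, 1), (590, 1), (673, 1)],
     [(57, 1), (170, 1), (254, 1), (450, 1), (478, 1), (645, 1)],
     [(85, 1), (141, 1), (198, 1), (506, 1), (534, 1), (617, 1)],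
     [(2, -1), (88, 1), (117, 1), (228, 1), (230, -1), (286, -1), (312, 1), (341, -1), (395, 1),
    (508, -1), (563, -1), (674, 1)],
     [(30, -1), (59, 1), (116, -1), (172, 1), (256, 1), (257, 1), (369, -1), (396, -1), (424, -1),
    (481, 1), (591, -1), (646, 1)],
     [(58, -1), (143, 1), (200, 1), (452, -1), (480, -1), (618, 1)],
     [(3, 1), (61, 1), (119, -1), (174, 1), (176, -1), (258, 1), (288, 1), (343, 1), (397, -1),
    (454, -1), (564, 1), (647, 1)],
     [(32, 1), (118, 1), (259, -1), (315, -1), (427, 1), (592, 1)],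
     [(31, 1), (60, -1), (89, -1), (145, 1), (202, 1), (203, 1), (371, 1), (398, 1), (426, 1),
    (482, -1), (537, -1), (619, 1)],
     [(5, -1), (34, 1), (120, 1), (121, 1), (178, 1), (234, 1), (260, -1), (316, -1), (346, -1),
    (373, -1), (565, -1), (593, 1)],
     [(4, -1), (63, -1), (92, -1), (147, 1), (149, -1), (204, 1), (290, -1), (345, -1), (399, 1),
    (455, 1), (510, 1), (620, 1)],
     [(33, -1), (91, 1), (205, -1), (317, 1), (428, -1), (538, 1)],
     [(7, 1), (123, -1), (179, -1), (235, -1), (292, -1), (566, 1)],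
     [(6, 1), (36, -1), (93, 1), (94, 1), (151, 1), (206, -1), (236, -1), (318, 1), (347, 1),
    (374, 1), (511, -1), (539, 1)],
     [(35, 1), (64, 1), (207, 1), (263, 1), (429, 1), (484, 1)],
     [(9, -1), (96, -1), (152, -1), (237, 1), (293, 1), (512, 1)],
     [(8, -1), (38, 1), (66, 1), (67, 1), (153, -1), (182, -1), (208, 1), (264, 1), (348, -1),
    (375, -1), (457, -1), (485, 1)],
     [(11, 1), (69, -1), (154, 1), (183, 1), (294, -1), (458, 1)],
     [(10, 1), (39, 1), (41, -1), (70, -1), (99, -1), (128, -1), (211, -1), (266, -1), (321, -1),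
    (349, 1), (403, -1), (431, 1)],
     [(13, -1), (14, -1), (42, -1), (71, 1), (100, 1), (129, 1), (157, -1), (185, -1), (240, -1),
    (295, 1), (377, 1), (404, 1)],
     [(16, 1), (44, 1), (103, -1), (131, -1), (241, 1), (323, 1)],
     [(18, -1), (46, -1), (76, -1), (132, 1), (187, 1), (269, 1)],
     [(20, 1), (48, 1), (77, 1), (105, 1), (160, 1), (215, 1)]]

/-- The matrices of a Chevalley basis: simple coroots (`0`–`3`), root vectors for the positive
roots (`4`–`27`) and their transposes (`28`–`51`). -/
def chevalleyMatrix (i : ℕ) : Comb :=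
  if i < 28 then positiveMatrices.getD i []
  else (positiveMatrices.getD (i - 24) []).map fun p => (27 * (p.1 % 27) + p.1 / 27, p.2)

lemma chevalleyMatrix_eq_nil {n : ℕ} (hn : 52 ≤ n) : chevalleyMatrix n = [] := by
  have : positiveMatrices.getD (n - 24) [] = [] := List.getD_eq_default _ _ <| by
    simp only [positiveMatrices, List.length_cons, List.length_nil]
    omega
  rw [chevalleyMatrix, if_neg (by omega), this, List.map_nil]

/-- Matrix entries determining the coordinates of a matrix with respect to the matrices
`chevalleyMatrix k`: a term `(q, k, c)` in row `p` means that the entry at `(p, q)` contributes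
`c` times its value to the coordinate `k`. -/
def entryCoords : List (List (ℕ × ℕ × ℤ)) :=
  [[(0, 0, 1), (0, 1, 1), (0, 2, 1), (0, 3, 1), (1, 4, 1), (2, 8, -1), (3, 11, 1), (4, 15, -1),
    (5, 14, -1), (6, 18, 1), (7, 17, 1), (8, 21, -1), (9, 20, -1), (10, 23, 1), (11, 22, 1), (13,
    24, -1), (16, 25, 1), (18, 26, -1), (20, 27, 1)], [(0, 28, 1), (1, 1, 1), (1, 2, 1), (2, 5,
    1), (3, 9, -1), (4, 13, 1), (5, 12, 1), (6, 16, -1), (8, 19, 1)], [(0, 32, -1), (1, 29, 1),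
    (2, 2, 1), (3, 6, 1), (4, 10, -1)], [(0, 35, 1), (1, 33, -1), (2, 30, 1), (4, 7, 1)], [(0, 39,
    -1), (1, 37, 1), (2, 34, -1), (3, 31, 1)], [(0, 38, -1), (1, 36, 1)], [(0, 42, 1), (1, 40,
    -1)], [(0, 41, 1), (7, 3, 1)], [(0, 45, -1), (1, 43, 1)], [(0, 44, -1)], [(0, 47, 1)], [(0,
    46, 1)], [], [(0, 48, -1)], [], [], [(0, 49, 1)], [], [(0, 50, -1)], [], [(0, 51, 1)], [], [],
    [], [], [], []]

/-- The contribution of a matrix unit to the coordinates. -/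
def matrixUnitCoords (n : ℕ) : Comb :=
  ((entryCoords.getD (n / 27) []).filter fun p => p.1 = n % 27).map Prod.snd

/-- The structure constants of the Chevalley basis. -/
def structureConst (i j : ℕ) : Comb :=
  collect (linExt matrixUnitCoords (collect (commutator (chevalleyMatrix i) (chevalleyMatrix j))))

attribute [irreducible] collect commutator chevalleyMatrix matrixUnitCoords structureConst

section Serre

variable {B : Type*} [DecidableEq B] {A : Type*} [LieRing A] [LieAlgebra ℂ A]

/-- The projection of the free Lie algebra onto the Lie algebra of a Cartan matrix. -/
def serreMk (CM : Matrix B B ℤ) :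
    FreeLieAlgebra ℂ (CartanMatrix.Generators B) →ₗ⁅ℂ⁆ Matrix.ToLieAlgebra ℂ CM where
  toFun x := (LieSubmodule.Quotient.mk x :
    FreeLieAlgebra ℂ _ ⧸ CartanMatrix.Relations.toIdeal ℂ CM)
  map_add' _ _ := rfl
  map_smul' _ _ := rfl
  map_lie' := rfl

lemma serreMk_surjective (CM : Matrix B B ℤ) : Function.Surjective (serreMk CM) :=
  Quot.mk_surjective

lemma exists_comp_serreMk_eq (CM : Matrix B B ℤ)
    (φ : FreeLieAlgebra ℂ (CartanMatrix.Generators B) →ₗ⁅ℂ⁆ A)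
    (hφ : ∀ x ∈ CartanMatrix.Relations.toSet ℂ CM, φ x = 0) :
    ∃ ρ : Matrix.ToLieAlgebra ℂ CM →ₗ⁅ℂ⁆ A, ∀ x, ρ (serreMk CM x) = φ x := by
  have hle : CartanMatrix.Relations.toIdeal ℂ CM ≤ φ.ker :=
    LieSubmodule.lieSpan_le.2 fun x hx => (LieHom.mem_ker).2 (hφ x hx)
  let ρ : Matrix.ToLieAlgebra ℂ CM →ₗ[ℂ] A :=
    (CartanMatrix.Relations.toIdeal ℂ CM).toSubmodule.liftQ (φ : _ →ₗ[ℂ] A)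
      (fun x hx => LinearMap.mem_ker.2 ((LieHom.mem_ker).1 (hle hx)))
  have hρ (x) : ρ (serreMk CM x) = φ x := rfl
  refine ⟨{ ρ with map_lie' := fun {x y} => ?_ }, hρ⟩
  obtain ⟨x, rfl⟩ := serreMk_surjective CM x
  obtain ⟨y, rfl⟩ := serreMk_surjective CM y
  change ρ ⁅serreMk CM x, serreMk CM y⁆ = ⁅ρ (serreMk CM x), ρ (serreMk CM y)⁆
  rw [← LieHom.map_lie, hρ, hρ, hρ, LieHom.map_lie]

lemma eq_top_of_serreMk_of_mem (CM : Matrix B B ℤ)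
    (N : LieSubalgebra ℂ (Matrix.ToLieAlgebra ℂ CM))
    (hN : ∀ s, serreMk CM (FreeLieAlgebra.of ℂ s) ∈ N) : N = ⊤ := by
  have h : N.incl.comp (FreeLieAlgebra.lift ℂ fun s => (⟨_, hN s⟩ : N)) = serreMk CM :=
    FreeLieAlgebra.hom_ext fun s => by
      simp only [LieHom.comp_apply, FreeLieAlgebra.lift_of_apply, LieSubalgebra.coe_incl]
  refine eq_top_iff.2 fun y _ => ?_
  obtain ⟨y, rfl⟩ := serreMk_surjective CM y
  rw [← h]
  exact Subtype.prop _

end Serre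

section Representation

attribute [local instance] LieRing.ofAssociativeRing LieAlgebra.ofAssociativeAlgebra

/-- The position of a Serre generator in the Chevalley basis. -/
def genIdx : CartanMatrix.Generators (Fin 4) → ℕ
  | .H i => i
  | .E i => 4 + i
  | .F i => 28 + i

/-- The iterated commutator `(ad s) ^ n t`. -/
def commPow (s : Comb) (n : ℕ) (t : Comb) : Comb := (commutator s)^[n] t

lemma eval_commPow (s t : Comb) (n : ℕ) : eval matrixUnit (commPow s n t) =
    ((LieAlgebra.ad ℂ _ (eval matrixUnit s)) ^ n) (eval matrixUnit t) := by
  induction n with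
  | zero => rfl
  | succ n ih =>
    rw [pow_succ', Module.End.mul_apply, ← ih, LieAlgebra.ad_apply, ← eval_commutator, commPow,
      Function.iterate_succ_apply', ← commPow]

set_option maxRecDepth 100000 in
open CartanMatrix in
lemma null_serre_relations : ∀ i j : Fin 4,
    null (commutator (chevalleyMatrix i) (chevalleyMatrix j)) = true ∧
    null (if i = j then smulAdd (-1) (chevalleyMatrix i)
        (commutator (chevalleyMatrix (4 + i)) (chevalleyMatrix (28 + i)))
      else commutator (chevalleyMatrix (4 + i)) (chevalleyMatrix (28 + j))) = true ∧
    null (smulAdd (-F₄ i j) (chevalleyMatrix (4 + j))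
      (commutator (chevalleyMatrix i) (chevalleyMatrix (4 + j)))) = true ∧
    null (smulAdd (- -F₄ i j) (chevalleyMatrix (28 + j))
      (commutator (chevalleyMatrix i) (chevalleyMatrix (28 + j)))) = true ∧
    null (commPow (chevalleyMatrix (4 + i)) (-F₄ i j).toNat
      (commutator (chevalleyMatrix (4 + i)) (chevalleyMatrix (4 + j)))) = true ∧
    null (commPow (chevalleyMatrix (28 + i)) (-F₄ i j).toNat
      (commutator (chevalleyMatrix (28 + i)) (chevalleyMatrix (28 + j)))) = true := by
  decide +kernel

open CartanMatrix in
lemma map_serre_relation_eq_zero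
    (φ : FreeLieAlgebra ℂ (Generators (Fin 4)) →ₗ⁅ℂ⁆ Module.End ℂ (ℕ →₀ ℂ))
    (hφ : ∀ s, φ (FreeLieAlgebra.of ℂ s) = eval matrixUnit (chevalleyMatrix (genIdx s))) :
    ∀ x ∈ Relations.toSet ℂ F₄, φ x = 0 := by
  have hH (i) : φ (FreeLieAlgebra.of ℂ (.H i)) = eval matrixUnit (chevalleyMatrix i) := hφ _
  have hE (i) : φ (FreeLieAlgebra.of ℂ (.E i)) = eval matrixUnit (chevalleyMatrix (4 + i)) := hφ _
  have hF (i) : φ (FreeLieAlgebra.of ℂ (.F i)) = eval matrixUnit (chevalleyMatrix (28 + i)) := hφ _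
  rintro x (((((⟨⟨i, j⟩, rfl⟩ | ⟨⟨i, j⟩, rfl⟩) | ⟨⟨i, j⟩, rfl⟩) | ⟨⟨i, j⟩, rfl⟩) |
    ⟨⟨i, j⟩, rfl⟩) | ⟨⟨i, j⟩, rfl⟩) <;>
    obtain ⟨hHH, hEF, hHE, hHF, hadE, hadF⟩ := null_serre_relations i j
  · simpa [Relations.HH, hH, eval_commutator] using eval_eq_zero_of_null matrixUnit hHH
  · by_cases hij : i = j
    · subst hij
      rw [if_pos rfl] at hEF
      simpa [Relations.EF, hH, hE, hF, eval_commutator, sub_eq_zero] using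
        eval_eq_of_null matrixUnit hEF
    · rw [if_neg hij] at hEF
      simpa [Relations.EF, hij, hE, hF, eval_commutator] using eval_eq_zero_of_null matrixUnit hEF
  · simpa [Relations.HE, hH, hE, eval_commutator, sub_eq_zero] using
      eval_eq_of_null matrixUnit hHE
  · have := eval_eq_of_null matrixUnit hHF
    simpa [Relations.HF, hH, hF, eval_commutator, eq_neg_iff_add_eq_zero] using this
  · simpa [Relations.adE, map_ad_pow_apply, hE, eval_commPow, eval_commutator] using
      eval_eq_zero_of_null matrixUnit hadE
  · simpa [Relations.adF, map_ad_pow_apply, hF, eval_commPow, eval_commutator] using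
      eval_eq_zero_of_null matrixUnit hadF

lemma exists_representation_serreMk :
    ∃ ρ : LieAlgebra.f₄ ℂ →ₗ⁅ℂ⁆ Module.End ℂ (ℕ →₀ ℂ),
      ∀ s, ρ (serreMk CartanMatrix.F₄ (FreeLieAlgebra.of ℂ s)) =
        eval matrixUnit (chevalleyMatrix (genIdx s)) := by
  have hof (s) := FreeLieAlgebra.lift_of_apply (R := ℂ)
    (f := fun s => eval matrixUnit (chevalleyMatrix (genIdx s))) s
  obtain ⟨ρ, hρ⟩ := exists_comp_serreMk_eq _ _ (map_serre_relation_eq_zero _ hof)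
  exact ⟨ρ, fun s => (hρ _).trans (hof s)⟩

end Representation

/-- A Chevalley basis of a Lie algebra of type `F₄`: the vectors `0`–`3` are the simple coroots,
`4`–`27` the positive and `28`–`51` the negative root vectors. The family is extended by zero in
order that natural numbers can be used as indices. -/
structure IsChevalley {L : Type*} [LieRing L] [LieAlgebra ℂ L] (x : ℕ → L) : Prop where
  eq_zero : ∀ i, 52 ≤ i → x i = 0
  lie : ∀ i j, ⁅x i, x j⁆ = eval x (structureConst i j)
  linearIndependent : LinearIndependent ℂ fun i : Fin 52 => x i
  top_le_span : ⊤ ≤ Submodule.span ℂ (Set.range fun i : Fin 52 => x i)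

section Representation

attribute [local instance] LieRing.ofAssociativeRing LieAlgebra.ofAssociativeAlgebra

section CoordMap

variable {M : Type*} [AddCommGroup M] [Module ℂ M] (y : ℕ → M)

/-- The linear map taking a matrix to the combination of the vectors `y` given by its coordinates
with respect to the matrices `chevalleyMatrix k`. -/
def coordMap : Module.End ℂ (ℕ →₀ ℂ) →ₗ[ℂ] M :=
  ∑ n ∈ Finset.range 729,
    (Finsupp.lapply (n / 27) ∘ₗ LinearMap.applyₗ (Finsupp.single (n % 27) (1 : ℂ))).smulRight
      (eval y (matrixUnitCoords n))

lemma matrixUnitCoords_eq_nil {n : ℕ} (hn : 729 ≤ n) : matrixUnitCoords n = [] := by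
  have : entryCoords.getD (n / 27) [] = [] := List.getD_eq_default _ _ <| by
    simp only [entryCoords, List.length_cons, List.length_nil]
    omega
  rw [matrixUnitCoords, this, List.filter_nil, List.map_nil]

lemma matrixUnit_single_apply (m n : ℕ) :
    matrixUnit m (Finsupp.single (n % 27) (1 : ℂ)) (n / 27) = if n = m then 1 else 0 := by
  by_cases h : n = m
  · simp [matrixUnit, h]
  · by_cases h' : n % 27 = m % 27
    · have : m / 27 ≠ n / 27 := by omega
      simp [matrixUnit, h, h', this]
    · simp [matrixUnit, h, h']

lemma coordMap_matrixUnit (m : ℕ) :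
    coordMap y (matrixUnit m) = eval y (matrixUnitCoords m) := by
  have (n : ℕ) : ((Finsupp.lapply (n / 27) ∘ₗ LinearMap.applyₗ
      (Finsupp.single (n % 27) (1 : ℂ))).smulRight (eval y (matrixUnitCoords n)))
        (matrixUnit m) = if n = m then eval y (matrixUnitCoords n) else 0 := by
    refine (congrArg (· • eval y (matrixUnitCoords n)) (matrixUnit_single_apply m n)).trans ?_
    simp only [ite_smul, one_smul, zero_smul]
  rw [coordMap, LinearMap.sum_apply, Finset.sum_congr rfl fun n _ => this n, Finset.sum_ite_eq']
  split_ifs with h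
  · rfl
  · rw [matrixUnitCoords_eq_nil (not_lt.1 fun hm => h (Finset.mem_range.2 hm)), eval_nil]

attribute [irreducible] coordMap

lemma coordMap_eval (s : Comb) :
    coordMap y (eval matrixUnit s) = eval y (linExt matrixUnitCoords s) := by
  rw [eval_linExt, ← funext (coordMap_matrixUnit y)]
  exact map_eval matrixUnit (coordMap y) s

set_option maxRecDepth 100000 in
lemma collect_linExt_matrixUnitCoords : ∀ j ∈ List.range 52,
    collect (linExt matrixUnitCoords (chevalleyMatrix j)) = [(j, 1)] := by
  decide +kernel

lemma coordMap_chevalleyMatrix {j : ℕ} (hj : j < 52) :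
    coordMap y (eval matrixUnit (chevalleyMatrix j)) = y j := by
  rw [coordMap_eval, ← eval_collect, collect_linExt_matrixUnitCoords j (List.mem_range.2 hj),
    eval_cons, eval_nil, one_smul, add_zero]

lemma eval_chevalleyMatrix_ne_zero {j : ℕ} (hj : j < 52) :
    eval matrixUnit (chevalleyMatrix j) ≠ 0 := fun h => by
  have := coordMap_chevalleyMatrix (fun _ => (1 : ℂ)) hj
  rw [h, map_zero] at this
  exact one_ne_zero this.symm

end CoordMap

/-- The entry `(i, j, c)` in position `k` means that the bracket of the vectors `i` and `j` of a
Chevalley basis is `c` times the vector `k + 8`. -/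
def parents : List (ℕ × ℕ × ℤ) :=
  [(5, 4, 1), (6, 5, 1), (7, 6, 1), (6, 8, 1), (5, 9, 2), (7, 9, 1), (5, 11, 1), (7, 11, 1),
    (7, 12, 1), (4, 14, 2), (7, 14, 1), (6, 16, 1), (7, 17, 1), (6, 18, 1), (6, 20, 1),
    (5, 21, 1), (5, 22, 1), (5, 24, 2), (6, 25, 1), (7, 26, 1)]

set_option maxRecDepth 100000 in
lemma null_parents : ∀ k ∈ Finset.range 20,
    let (i, j, c) := parents.getD k 0
    i ∈ Finset.Ico 4 8 ∧ j ∈ Finset.Ico 4 (k + 8) ∧ c ≠ 0 ∧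
      null (smulAdd (-c) (chevalleyMatrix (k + 8))
        (commutator (chevalleyMatrix i) (chevalleyMatrix j))) = true ∧
      null (smulAdd (-(-c)) (chevalleyMatrix (k + 32))
        (commutator (chevalleyMatrix (i + 24)) (chevalleyMatrix (j + 24)))) = true := by
  decide +kernel

set_option maxRecDepth 100000 in
lemma null_commutator_generator : ∀ k : Fin 4, ∀ i ∈ [genIdx (.E k), genIdx (.F k)],
    ∀ j ∈ Finset.range 52, null (smulAdd (-1) (linExt chevalleyMatrix (structureConst i j))
      (commutator (chevalleyMatrix i) (chevalleyMatrix j))) = true := by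
  decide +kernel

section Existence

variable {L : Type*} [LieRing L] [LieAlgebra ℂ L] {ρ : L →ₗ⁅ℂ⁆ Module.End ℂ (ℕ →₀ ℂ)}
  {g : CartanMatrix.Generators (Fin 4) → L}

lemma exists_map_eq_of_null {k i j : ℕ} {c : ℤ} (hc : c ≠ 0)
    (h : null (smulAdd (-c) (chevalleyMatrix k)
      (commutator (chevalleyMatrix i) (chevalleyMatrix j))) = true)
    (hi : ∃ y, ρ y = eval matrixUnit (chevalleyMatrix i))
    (hj : ∃ y, ρ y = eval matrixUnit (chevalleyMatrix j)) :
    ∃ y, ρ y = eval matrixUnit (chevalleyMatrix k) := by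
  obtain ⟨y, hy⟩ := hi
  obtain ⟨z, hz⟩ := hj
  have hyz := eval_eq_of_null matrixUnit h
  rw [eval_commutator, ← hy, ← hz, ← LieHom.map_lie, ← Int.cast_smul_eq_zsmul ℂ] at hyz
  refine ⟨(c : ℂ)⁻¹ • ⁅y, z⁆, ?_⟩
  rw [map_smul, hyz]
  exact inv_smul_smul₀ (Int.cast_ne_zero.2 hc) _

lemma exists_map_eq_rootVector
    (hg : ∀ s, ρ (g s) = eval matrixUnit (chevalleyMatrix (genIdx s))) (k : ℕ) (h4 : 4 ≤ k)
    (h28 : k < 28) : (∃ y, ρ y = eval matrixUnit (chevalleyMatrix k)) ∧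
      ∃ y, ρ y = eval matrixUnit (chevalleyMatrix (k + 24)) := by
  induction k using Nat.strong_induction_on with
  | _ k ih =>
    rcases lt_or_ge k 8 with h8 | h8
    · obtain ⟨k, rfl⟩ := Nat.exists_eq_add_of_le h4
      refine ⟨⟨_, hg (.E ⟨k, by omega⟩)⟩, ⟨_, (hg (.F ⟨k, by omega⟩)).trans ?_⟩⟩
      rw [genIdx, add_right_comm]
    · obtain ⟨k, rfl⟩ := Nat.exists_eq_add_of_le' h8
      obtain ⟨hi, hj, hc, hpos, hneg⟩ := null_parents k (Finset.mem_range.2 (by omega))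
      rw [Finset.mem_Ico] at hi hj
      obtain ⟨hi_pos, hi_neg⟩ := ih _ (by omega) hi.1 (by omega)
      obtain ⟨hj_pos, hj_neg⟩ := ih _ (by omega) hj.1 (by omega)
      exact ⟨exists_map_eq_of_null hc hpos hi_pos hj_pos,
        exists_map_eq_of_null (neg_ne_zero.2 hc) hneg hi_neg hj_neg⟩

lemma exists_map_eq_chevalleyMatrix
    (hg : ∀ s, ρ (g s) = eval matrixUnit (chevalleyMatrix (genIdx s))) (i : ℕ) :
    ∃ y, ρ y = eval matrixUnit (chevalleyMatrix i) := by
  rcases lt_or_ge i 4 with h4 | h4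
  · exact ⟨_, hg (.H ⟨i, h4⟩)⟩
  rcases lt_or_ge i 28 with h28 | h28
  · exact (exists_map_eq_rootVector hg i h4 h28).1
  rcases lt_or_ge i 52 with h52 | h52
  · obtain ⟨i, rfl⟩ := Nat.exists_eq_add_of_le' (show 24 ≤ i by omega)
    exact (exists_map_eq_rootVector hg i (by omega) (by omega)).2
  · exact ⟨0, by rw [chevalleyMatrix_eq_nil h52, map_zero, eval_nil]⟩

/-- The elements of a Lie algebra whose adjoint action leaves a subspace invariant. -/
def stabilizer (S : Submodule ℂ L) : LieSubalgebra ℂ L where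
  carrier := {y | ∀ v ∈ S, ⁅y, v⁆ ∈ S}
  add_mem' ha hb v hv := by rw [add_lie]; exact S.add_mem (ha v hv) (hb v hv)
  zero_mem' v _ := by rw [zero_lie]; exact S.zero_mem
  smul_mem' c a ha v hv := by rw [smul_lie]; exact S.smul_mem c (ha v hv)
  lie_mem' ha hb v hv := by rw [lie_lie]; exact S.sub_mem (ha _ (hb v hv)) (hb _ (ha v hv))

lemma mem_stabilizer_span {ι : Type*} {x : ι → L} {y : L}
    (hy : ∀ i, ⁅y, x i⁆ ∈ Submodule.span ℂ (Set.range x)) :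
    y ∈ stabilizer (Submodule.span ℂ (Set.range x)) :=
  show Submodule.span ℂ (Set.range x) ≤
    (Submodule.span ℂ (Set.range x)).comap (LieAlgebra.ad ℂ L y : L →ₗ[ℂ] L) from
  Submodule.span_le.2 (Set.range_subset_iff.2 hy)

lemma eq_bot_or_eq_top_of_stabilizer_eq_top [LieAlgebra.IsSimple ℂ L] {S : Submodule ℂ L}
    (hS : stabilizer S = ⊤) : S = ⊥ ∨ S = ⊤ := by
  let I : LieIdeal ℂ L :=
    { S with lie_mem := fun {y v} hv => (hS ▸ LieSubalgebra.mem_top y : y ∈ stabilizer S) v hv }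
  exact (LieAlgebra.IsSimple.eq_bot_or_eq_top I).imp (congrArg LieSubmodule.toSubmodule)
    (congrArg LieSubmodule.toSubmodule)

variable {x : ℕ → L}

lemma map_eval_eq (hx : ∀ i, ρ (x i) = eval matrixUnit (chevalleyMatrix i)) (s : Comb) :
    ρ (eval x s) = eval matrixUnit (linExt chevalleyMatrix s) := by
  rw [eval_linExt, ← funext hx]
  exact map_eval x ρ s

lemma lie_generator_eq_eval (hρ : Function.Injective ρ)
    (hx : ∀ i, ρ (x i) = eval matrixUnit (chevalleyMatrix i)) {k : Fin 4} {i j : ℕ}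
    (hi : i ∈ [genIdx (.E k), genIdx (.F k)]) (hj : j < 52) :
    ⁅x i, x j⁆ = eval x (structureConst i j) := hρ <| by
  have := eval_eq_of_null matrixUnit (null_commutator_generator k i hi j (Finset.mem_range.2 hj))
  rw [eval_commutator, one_smul] at this
  rw [LieHom.map_lie, hx, hx, this, map_eval_eq hx]

lemma generator_mem_stabilizer_span (hρ : Function.Injective ρ)
    (hg : ∀ s, ρ (g s) = eval matrixUnit (chevalleyMatrix (genIdx s)))
    (hx : ∀ i, ρ (x i) = eval matrixUnit (chevalleyMatrix i)) (hx0 : ∀ i, 52 ≤ i → x i = 0)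
    (s : CartanMatrix.Generators (Fin 4)) :
    g s ∈ stabilizer (Submodule.span ℂ (Set.range fun i : Fin 52 => x i)) := by
  have hxS (k : ℕ) : x k ∈ Submodule.span ℂ (Set.range fun i : Fin 52 => x i) := by
    by_cases hk : k < 52
    · exact Submodule.subset_span ⟨⟨k, hk⟩, rfl⟩
    · rw [hx0 k (not_lt.1 hk)]
      exact Submodule.zero_mem _
  have hmem (k : Fin 4) {t} (ht : genIdx t ∈ [genIdx (.E k), genIdx (.F k)]) :
      g t ∈ stabilizer (Submodule.span ℂ (Set.range fun i : Fin 52 => x i)) :=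
    mem_stabilizer_span fun j => by
      rw [hρ ((hg t).trans (hx _).symm), lie_generator_eq_eval hρ hx ht j.2]
      exact eval_mem hxS _
  have hE (k : Fin 4) := hmem (t := .E k) k (by simp)
  have hF (k : Fin 4) := hmem (t := .F k) k (by simp)
  cases s with
  | H k =>
    have : g (.H k) = ⁅g (.E k), g (.F k)⁆ := hρ <| by
      have := eval_eq_of_null (c := 1) matrixUnit (if_pos rfl ▸ (null_serre_relations k k).2.1)
      rw [LieHom.map_lie, hg, hg, hg, genIdx, ← one_smul ℤ (eval matrixUnit _), ← this,
        eval_commutator]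
      rfl
    rw [this]
    exact LieSubalgebra.lie_mem _ (hE k) (hF k)
  | E k => exact hE k
  | F k => exact hF k

lemma isChevalley_of_map_eq
    (hx : ∀ i, ρ (x i) = eval matrixUnit (chevalleyMatrix i)) (hx0 : ∀ i, 52 ≤ i → x i = 0)
    (hspan : ⊤ ≤ Submodule.span ℂ (Set.range fun i : Fin 52 => x i)) : IsChevalley x := by
  have hcoord : coordMap x ∘ₗ (ρ : L →ₗ[ℂ] Module.End ℂ (ℕ →₀ ℂ)) = LinearMap.id :=
    LinearMap.ext_on_range (top_le_iff.1 hspan) fun i =>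
      (congrArg (coordMap x) (hx i)).trans (coordMap_chevalleyMatrix x i.2)
  refine ⟨hx0, fun i j => ?_, ?_, hspan⟩
  · have := LinearMap.congr_fun hcoord ⁅x i, x j⁆
    rw [LinearMap.comp_apply, LieHom.coe_toLinearMap, LieHom.map_lie, hx, hx, ← eval_commutator,
      ← eval_collect, coordMap_eval] at this
    rw [structureConst, eval_collect]
    exact this.symm
  · have hsingle : (coordMap (fun n => Finsupp.single n (1 : ℂ)) ∘ₗ
        (ρ : L →ₗ[ℂ] Module.End ℂ (ℕ →₀ ℂ))) ∘ (fun i : Fin 52 => x i) =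
        fun i : Fin 52 => Finsupp.single (i : ℕ) (1 : ℂ) :=
      funext fun i => (congrArg (coordMap _) (hx i)).trans (coordMap_chevalleyMatrix _ i.2)
    refine LinearIndependent.of_comp (coordMap (fun n => Finsupp.single n (1 : ℂ)) ∘ₗ
      (ρ : L →ₗ[ℂ] Module.End ℂ (ℕ →₀ ℂ))) ?_
    rw [hsingle]
    exact (Finsupp.linearIndependent_single_one ℂ ℕ).comp _ Fin.val_injective

lemma exists_isChevalley_of_representation [LieAlgebra.IsSimple ℂ L]
    (hg : ∀ s, ρ (g s) = eval matrixUnit (chevalleyMatrix (genIdx s)))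
    (htop : ∀ N : LieSubalgebra ℂ L, (∀ s, g s ∈ N) → N = ⊤) : ∃ x : ℕ → L, IsChevalley x := by
  have hE : ρ (g (.E 0)) ≠ 0 := by
    rw [hg]
    exact eval_chevalleyMatrix_ne_zero (by norm_num [genIdx])
  have hρ : Function.Injective ρ := by
    rw [← LieHom.ker_eq_bot]
    exact (LieAlgebra.IsSimple.eq_bot_or_eq_top ρ.ker).resolve_right fun hker =>
      hE (LieHom.mem_ker.1 (hker ▸ LieSubmodule.mem_top _))
  choose x hx using exists_map_eq_chevalleyMatrix hg
  have hx0 (i : ℕ) (hi : 52 ≤ i) : x i = 0 :=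
    hρ (by rw [hx, chevalleyMatrix_eq_nil hi, map_zero, eval_nil])
  refine ⟨x, isChevalley_of_map_eq hx hx0 (top_le_iff.2 ?_)⟩
  refine (eq_bot_or_eq_top_of_stabilizer_eq_top
    (htop _ (generator_mem_stabilizer_span hρ hg hx hx0))).resolve_left fun hbot => ?_
  have : x 4 = 0 := (Submodule.span_eq_bot.1 hbot) _ ⟨4, rfl⟩
  exact eval_chevalleyMatrix_ne_zero (j := 4) (by norm_num) (by rw [← hx, this, map_zero])

end Existence

lemma exists_isChevalley {L : Type*} [LieRing L] [LieAlgebra ℂ L] [LieAlgebra.IsSimple ℂ L]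
    (φ : L ≃ₗ⁅ℂ⁆ LieAlgebra.f₄ ℂ) : ∃ x : ℕ → L, IsChevalley x := by
  obtain ⟨ρ, hρ⟩ := exists_representation_serreMk
  refine exists_isChevalley_of_representation (ρ := ρ.comp φ.toLieHom)
    (g := fun s => φ.symm (serreMk CartanMatrix.F₄ (FreeLieAlgebra.of ℂ s)))
    (fun s => (congrArg ρ (φ.apply_symm_apply _)).trans (hρ s)) fun N hN => ?_
  have hcomap := eq_top_of_serreMk_of_mem CartanMatrix.F₄ (N.comap φ.symm.toLieHom) hN
  refine eq_top_iff.2 fun y _ => ?_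
  have hy : φ.symm (φ y) ∈ N :=
    (hcomap ▸ LieSubalgebra.mem_top _ : φ y ∈ N.comap φ.symm.toLieHom)
  rwa [φ.symm_apply_apply] at hy

end Representation

/-! ### Coordinates with respect to a Chevalley basis -/

namespace IsChevalley

variable {L : Type*} [LieRing L] [LieAlgebra ℂ L] {x : ℕ → L} (hx : IsChevalley x)

/-- The coordinates with respect to a Chevalley basis; those with index at least `52` are zero. -/
def coord (k : ℕ) : L →ₗ[ℂ] ℂ :=
  if h : k < 52 then (Module.Basis.mk hx.linearIndependent hx.top_le_span).coord ⟨k, h⟩ else 0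

lemma coord_apply {k : ℕ} (hk : k < 52) (j : ℕ) : hx.coord k (x j) = if j = k then 1 else 0 := by
  by_cases hj : j < 52
  · have : x j = Module.Basis.mk hx.linearIndependent hx.top_le_span ⟨j, hj⟩ := by
      rw [Module.Basis.mk_apply]
    rw [coord, dif_pos hk, this, Module.Basis.coord_apply, Module.Basis.repr_self,
      Finsupp.single_apply]
    exact if_congr Fin.ext_iff rfl rfl
  · rw [hx.eq_zero j (not_lt.1 hj), map_zero, if_neg (by omega)]

lemma sum_coord (v : L) : ∑ k ∈ Finset.range 52, hx.coord k v • x k = v := by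
  have := (Module.Basis.mk hx.linearIndependent hx.top_le_span).sum_repr v
  rw [Finset.sum_range]
  simpa [coord] using this

lemma ext_coord {v w : L} (h : ∀ k < 52, hx.coord k v = hx.coord k w) : v = w := by
  rw [← hx.sum_coord v, ← hx.sum_coord w]
  exact Finset.sum_congr rfl fun k hk => by rw [h k (Finset.mem_range.1 hk)]

lemma coord_eval {k : ℕ} (hk : k < 52) (s : Comb) : hx.coord k (eval x s) = coeff s k := by
  rw [map_eval, ← eval_ite_eq_coeff]
  exact congrArg (eval · s) (funext (hx.coord_apply hk))

include hx in
lemma ne_zero {k : ℕ} (hk : k < 52) : x k ≠ 0 := fun h => by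
  simpa [h] using hx.coord_apply hk k

include hx in
lemma lie_eval_eq_smul {s t r : Comb} {c : ℤ}
    (h : null (smulAdd (-c) r (bilinExt structureConst s t)) = true) :
    ⁅eval x s, eval x t⁆ = (c : ℂ) • eval x r := by
  rw [lie_eval_eval hx.lie, eval_eq_of_null x h, Int.cast_smul_eq_zsmul]

lemma coord_lie_eval (s : Comb) (v : L) {r : ℕ} (hr : r < 52) :
    hx.coord r ⁅eval x s, v⁆ =
      ∑ k ∈ Finset.range 52, hx.coord k v * coeff (bilinExt structureConst s [(k, 1)]) r := by
  conv_lhs => rw [← hx.sum_coord v]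
  rw [lie_sum, map_sum]
  refine Finset.sum_congr rfl fun k _ => ?_
  have : x k = eval x [(k, 1)] := by simp
  rw [lie_smul, map_smul, smul_eq_mul, this, lie_eval_eval hx.lie, hx.coord_eval hr]

include hx in
lemma map_lieEquiv (g : L ≃ₗ⁅ℂ⁆ L) : IsChevalley fun k => g (x k) where
  eq_zero i hi := by rw [hx.eq_zero i hi]; exact g.toLinearEquiv.map_zero
  lie i j := by rw [← LieEquiv.map_lie, hx.lie]; exact map_eval x g.toLinearEquiv _
  linearIndependent :=
    hx.linearIndependent.map' (g.toLinearEquiv : L →ₗ[ℂ] L) g.toLinearEquiv.ker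
  top_le_span := by
    have : Set.range (fun i : Fin 52 => g (x i)) =
        g.toLinearEquiv '' .range fun i : Fin 52 => x i :=
      Set.range_comp _ _
    rw [this, top_le_iff]
    refine (Submodule.span_image (g.toLinearEquiv : L →ₗ[ℂ] L)).trans ?_
    rw [top_le_iff.1 hx.top_le_span, Submodule.map_top, LinearEquiv.range]

lemma finrank_eq_card {ι : Type*} [Fintype ι] [DecidableEq ι] {S : Submodule ℂ L} {p : ι → ℕ}
    {y : ι → L} (hy : ∀ i, y i ∈ S) (hp : ∀ i j, hx.coord (p i) (y j) = if j = i then 1 else 0)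
    (hS : ∀ v ∈ S, v = ∑ i, hx.coord (p i) v • y i) : Module.finrank ℂ S = Fintype.card ι := by
  have hli : LinearIndependent ℂ y := Fintype.linearIndependent_iff.2 fun c hc i => by
    simpa [hp] using congrArg (hx.coord (p i)) hc
  have hspan : S = Submodule.span ℂ (Set.range y) :=
    le_antisymm
      (fun v hv => hS v hv ▸ Submodule.sum_mem _ fun i _ =>
        Submodule.smul_mem _ _ (Submodule.subset_span (Set.mem_range_self i)))
      (Submodule.span_le.2 (Set.range_subset_iff.2 hy))
  rw [hspan, finrank_span_eq_card hli]

end IsChevalley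

/-! ### Linear equations over the integers -/

/-- Eliminate the leading index of `r` from `s`. -/
def reduceOne (r s : Comb) : Comb :=
  match r with
  | [] => s
  | p :: _ =>
    bif isZero p.2 then s else bif isZero (coeff s p.1) then s
    else collect (smulAdd p.2 s (smulAdd (-coeff s p.1) r []))

/-- Eliminate the leading indices of the members of `B`, starting with the last one. -/
def reduce (B : List Comb) (s : Comb) : Comb := fold reduceOne s B

/-- Gaussian elimination without divisions. -/
def echelon (rows : List Comb) : List Comb := fold (fun s B => reduce B s :: B) [] rows

/-- The coordinates of `⁅s, v⁆`, as linear forms in the coordinates of `v`. -/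
def adRows (s : Comb) : List Comb :=
  let columns := (List.range 52).map fun k => (k, collect (bilinExt structureConst s [(k, 1)]))
  (List.range 52).map fun r => collect (columns.map fun p => (p.1, coeff p.2 r))

/-- The test whether linear forms vanish on the common centralizer of some elements. -/
def vanish (els targets : List Comb) : Bool :=
  targets.all fun t => null (reduce (echelon (els.flatMap adRows)) t)

/-- The linear forms whose vanishing at `v` expresses that `v` is the combination of the `z i`
in which `z i` has as coefficient the coordinate of `v` with index `p i`. -/
def spanEqs {n : ℕ} (p : Fin n → ℕ) (z : Fin n → Comb) : List Comb :=
  (List.range 52).map fun r => (r, 1) :: List.ofFn fun i => (p i, -coeff (z i) r)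

section Vanish

variable {c : ℕ → ℂ}

lemma eval_reduceOne_eq_zero_iff {r : Comb} (hr : eval c r = 0) (s : Comb) :
    eval c (reduceOne r s) = 0 ↔ eval c s = 0 := by
  match r with
  | [] => rfl
  | p :: r =>
    rw [reduceOne, bif_isZero, bif_isZero]
    split_ifs with h
    · rfl
    · rfl
    · rw [eval_collect, eval_smulAdd, eval_smulAdd, hr, eval_nil, smul_zero, add_zero, add_zero,
        smul_eq_zero_iff_right h]

lemma eval_reduce_eq_zero_iff {B : List Comb} (hB : ∀ r ∈ B, eval c r = 0) (s : Comb) :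
    eval c (reduce B s) = 0 ↔ eval c s = 0 := by
  induction B with
  | nil => rfl
  | cons r B ih =>
    rw [List.forall_mem_cons] at hB
    exact (eval_reduceOne_eq_zero_iff hB.1 _).trans (ih hB.2)

lemma eval_eq_zero_of_mem_echelon {rows : List Comb} (h : ∀ s ∈ rows, eval c s = 0) :
    ∀ r ∈ echelon rows, eval c r = 0 := by
  induction rows with
  | nil => exact fun r hr => absurd hr List.not_mem_nil
  | cons s rows ih =>
    rw [List.forall_mem_cons] at h
    exact List.forall_mem_cons.2 ⟨(eval_reduce_eq_zero_iff (ih h.2) s).2 h.1, ih h.2⟩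

variable {L : Type*} [LieRing L] [LieAlgebra ℂ L] {x : ℕ → L} (hx : IsChevalley x)

lemma eval_map_range (f : ℕ → ℤ) (n : ℕ) :
    eval c ((List.range n).map fun k => (k, f k)) = ∑ k ∈ Finset.range n, c k * f k := by
  rw [eval, List.map_map, Function.comp_def]
  simp only [zsmul_eq_mul']
  rfl

lemma forall_mem_adRows_iff {s : Comb} {v : L} :
    (∀ r ∈ adRows s, eval (fun k => hx.coord k v) r = 0) ↔ ⁅eval x s, v⁆ = 0 := by
  have hrow (r : ℕ) (hr : r < 52) : eval (fun k => hx.coord k v)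
      (collect (((List.range 52).map fun k =>
        (k, collect (bilinExt structureConst s [(k, 1)]))).map fun p => (p.1, coeff p.2 r))) =
      hx.coord r ⁅eval x s, v⁆ := by
    simp only [eval_collect, List.map_map, Function.comp_def, coeff_collect,
      eval_map_range, hx.coord_lie_eval s v hr]
  rw [adRows, List.forall_mem_map]
  refine ⟨fun h => hx.ext_coord fun r hr => ?_, fun h r hr => ?_⟩
  · rw [← hrow r hr, map_zero]
    exact h r (List.mem_range.2 hr)
  · exact (hrow r (List.mem_range.1 hr)).trans (by rw [h, map_zero])

lemma eval_coord_eq_zero_of_vanish {els targets : List Comb} (h : vanish els targets = true)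
    {v : L} (hv : ∀ s ∈ els, ⁅eval x s, v⁆ = 0) :
    ∀ t ∈ targets, eval (fun k => hx.coord k v) t = 0 := by
  have hrows : ∀ r ∈ els.flatMap adRows, eval (fun k => hx.coord k v) r = 0 := fun r hr => by
    obtain ⟨s, hs, hr⟩ := List.mem_flatMap.1 hr
    exact (forall_mem_adRows_iff hx).2 (hv s hs) r hr
  exact fun t ht => (eval_reduce_eq_zero_iff (eval_eq_zero_of_mem_echelon hrows) t).1
    (eval_eq_zero_of_null _ (List.all_eq_true.1 h t ht))

include hx in
lemma lie_eq_zero_of_vanish {els : List Comb} {t : Comb} (h : vanish els (adRows t) = true)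
    {v : L} (hv : ∀ s ∈ els, ⁅eval x s, v⁆ = 0) : ⁅eval x t, v⁆ = 0 :=
  (forall_mem_adRows_iff hx).1 (eval_coord_eq_zero_of_vanish hx h hv)

lemma eq_sum_of_vanish {els : List Comb} {n : ℕ} {p : Fin n → ℕ} {z : Fin n → Comb}
    (h : vanish els (spanEqs p z) = true) {v : L} (hv : ∀ s ∈ els, ⁅eval x s, v⁆ = 0) :
    v = ∑ i, hx.coord (p i) v • eval x (z i) := by
  refine hx.ext_coord fun k hk => ?_
  have := eval_coord_eq_zero_of_vanish hx h hv _ (List.mem_map_of_mem (List.mem_range.2 hk))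
  rw [eval_cons, one_smul, eval, List.map_ofFn, List.sum_ofFn] at this
  rw [eq_neg_of_add_eq_zero_left this, map_sum, ← Finset.sum_neg_distrib]
  refine Finset.sum_congr rfl fun i _ => ?_
  rw [map_smul, hx.coord_eval hk, smul_eq_mul, mul_comm, Function.comp_apply, neg_zsmul, neg_neg,
    zsmul_eq_mul]

end Vanish

/-! ### Property (P) for explicit elements -/

section BracketSpace

variable {L : Type*} [LieRing L] [LieAlgebra ℂ L] {e f h v : L}

/-- The subspace `[[f, 𝔤^e], v]`. -/
def bracketSpace (e f v : L) : Submodule ℂ L where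
  carrier := {z | ∃ y : L, ⁅y, e⁆ = 0 ∧ ⁅⁅f, y⁆, v⁆ = z}
  add_mem' := by
    rintro _ _ ⟨y, hy, rfl⟩ ⟨z, hz, rfl⟩
    exact ⟨y + z, by rw [add_lie, hy, hz, add_zero], by rw [lie_add, add_lie]⟩
  zero_mem' := ⟨0, zero_lie e, by rw [lie_zero, zero_lie]⟩
  smul_mem' := by
    rintro c _ ⟨y, hy, rfl⟩
    exact ⟨c • y, by rw [smul_lie, hy, smul_zero], by rw [lie_smul, smul_lie]⟩

lemma mem_bracketSpace {z : L} : z ∈ bracketSpace e f v ↔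
    ∃ y : L, ⁅y, e⁆ = 0 ∧ ⁅⁅f, y⁆, v⁆ = z :=
  Iff.rfl

/-- If `u` has weight `p` and `ad e ^ 2` kills it, then `⁅f, ⁅e, u⁆⁆` differs from a nonzero
multiple of `u` by an element of the centralizer of `e`, which commutes with `v`. -/
lemma lie_mem_bracketSpace (ht : IsSl2Triple h e f) (hv : InCenterOfCentralizer L e v) {u : L}
    {p : ℕ} (hu : ⁅h, u⁆ = (p : ℂ) • u) (heu : ⁅e, ⁅e, u⁆⁆ = 0) : ⁅u, v⁆ ∈ bracketSpace e f v := by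
  have hp : (p : ℂ) + 2 ≠ 0 := by exact_mod_cast (by omega : p + 2 ≠ 0)
  have hhe : ⁅h, ⁅e, u⁆⁆ = ((p : ℂ) + 2) • ⁅e, u⁆ := by
    rw [leibniz_lie, ht.lie_h_e_nsmul, hu, nsmul_lie, lie_smul, add_smul, add_comm,
      ← Nat.cast_smul_eq_nsmul ℂ, Nat.cast_ofNat]
  have hy : ⁅⁅f, ⁅e, u⁆⁆ - ((p : ℂ) + 2) • u, e⁆ = 0 := by
    rw [← lie_skew, lie_sub, leibniz_lie, ht.lie_e_f, heu, lie_zero, hhe, lie_smul, add_zero,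
      sub_self, neg_zero]
  have hvy := hv.2 _ hy
  rw [← lie_skew, neg_eq_zero, sub_lie, sub_eq_zero, smul_lie] at hvy
  rw [← Submodule.smul_mem_iff _ hp, ← hvy]
  exact mem_bracketSpace.2 ⟨⁅e, u⁆, by rw [← lie_skew, heu, neg_zero], rfl⟩

end BracketSpace

/-- The centre of the centralizer of `e₀` is contained in the span of the `z i`, whose coordinates
with indices `p i` are dual to them. The vectors `z i` have weights `q i` for `h₀`, and the last
one is in the centre. The elements `els` of the centralizer are the ones used to prove this. -/
structure IsCenter (h₀ e₀ : Comb) {n : ℕ} (z : Fin (n + 1) → Comb) (p : Fin (n + 1) → ℕ)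
    (q : Fin (n + 1) → ℤ) (els : List Comb) : Prop where
  span : vanish (e₀ :: els) (spanEqs p z) = true
  lie : ∀ s ∈ els, null (bilinExt structureConst e₀ s) = true
  last : vanish [e₀] (adRows (z (.last n))) = true
  weight : ∀ i, null (smulAdd (-q i) (z i) (bilinExt structureConst h₀ (z i))) = true
  lt : ∀ i, p i < 52
  coeff_eq : ∀ i j, coeff (z j) (p i) = if j = i then 1 else 0

namespace IsCenter

variable {L : Type*} [LieRing L] [LieAlgebra ℂ L] {x : ℕ → L} (hx : IsChevalley x) {h₀ e₀ : Comb}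
  {n : ℕ} {z : Fin (n + 1) → Comb} {p : Fin (n + 1) → ℕ} {q : Fin (n + 1) → ℤ} {els : List Comb}
  (hc : IsCenter h₀ e₀ z p q els)

include hc

lemma eq_sum_coord {v : L} (hv : InCenterOfCentralizer L (eval x e₀) v) :
    v = ∑ i, hx.coord (p i) v • eval x (z i) := by
  refine eq_sum_of_vanish hx hc.span (List.forall_mem_cons.2 ⟨?_, fun s hs => ?_⟩)
  · rw [← lie_skew, hv.1, neg_zero]
  · rw [← lie_skew, hv.2, neg_zero]
    rw [← lie_skew, lie_eval_eval hx.lie, eval_eq_zero_of_null x (hc.lie s hs), neg_zero]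

lemma coord_eval_eq (i j : Fin (n + 1)) :
    hx.coord (p i) (eval x (z j)) = if j = i then 1 else 0 := by
  rw [hx.coord_eval (hc.lt i), hc.coeff_eq]
  split_ifs <;> simp

lemma eq_of_coord_ne_zero {v : L} (hv : InCenterOfCentralizer L (eval x e₀) v) {c : ℂ}
    (hvc : ⁅eval x h₀, v⁆ = c • v) {i : Fin (n + 1)} (hi : hx.coord (p i) v ≠ 0) : c = q i := by
  have h := congrArg (hx.coord (p i)) hvc
  rw [map_smul, smul_eq_mul, hc.eq_sum_coord hx hv, lie_sum, map_sum, map_sum,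
    Finset.sum_eq_single i, Finset.sum_eq_single i, lie_smul, hx.lie_eval_eq_smul (hc.weight i),
    map_smul, map_smul, map_smul, hc.coord_eval_eq, if_pos rfl] at h
  · simpa [hi, mul_comm] using h.symm
  all_goals simp +contextual [hc.coord_eval_eq hx, hx.lie_eval_eq_smul (hc.weight _)]

include hx in
lemma eval_last_ne_zero : eval x (z (.last n)) ≠ 0 := fun h => by
  simpa [h] using hc.coord_eval_eq hx (.last n) (.last n)

include hx in
lemma inCenterOfCentralizer_last :
    InCenterOfCentralizer L (eval x e₀) (eval x (z (.last n))) := by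
  have (y : L) (hy : ⁅y, eval x e₀⁆ = 0) : ⁅eval x (z (.last n)), y⁆ = 0 :=
    lie_eq_zero_of_vanish hx hc.last fun s hs => by
      rw [List.mem_singleton.1 hs, ← lie_skew, hy, neg_zero]
  exact ⟨this _ (lie_self _), this⟩

include hx in
lemma propertyP {f : L} (H : ∀ (v : L) (a : Fin (n + 1) → ℂ) (i : Fin (n + 1)),
      InCenterOfCentralizer L (eval x e₀) v → v = ∑ j, a j • eval x (z j) →
      a i ≠ 0 → (∀ j < i, a j = 0) →
      ∀ k, q (.last n) ≤ q k → eval x (z k) ∈ bracketSpace (eval x e₀) f v) :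
    PropertyP L (eval x e₀) (eval x h₀) f := by
  intro m _ hmax v hv hv0 y hy hym
  have hle : (q (.last n) : ℂ) ≤ m := hmax _ ⟨_, hc.eval_last_ne_zero hx,
    hc.inCenterOfCentralizer_last hx, hx.lie_eval_eq_smul (hc.weight _)⟩
  obtain ⟨i, hi, hlt⟩ : ∃ i, hx.coord (p i) v ≠ 0 ∧ ∀ j < i, hx.coord (p j) v = 0 := by
    have hne : {i | hx.coord (p i) v ≠ 0}.Nonempty := by
      by_contra! hzero
      refine hv0 ((hc.eq_sum_coord hx hv).trans (Finset.sum_eq_zero fun i _ => ?_))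
      rw [not_not.1 (Set.eq_empty_iff_forall_notMem.1 hzero i), zero_smul]
    exact ⟨_, wellFounded_lt.min_mem _ hne,
      fun j hj => by_contra fun h => wellFounded_lt.not_lt_min _ h hj⟩
  rw [← mem_bracketSpace, hc.eq_sum_coord hx hy]
  refine Submodule.sum_mem _ fun k _ => ?_
  by_cases hk : hx.coord (p k) y = 0
  · rw [hk, zero_smul]
    exact Submodule.zero_mem _
  · refine Submodule.smul_mem _ _ (H v _ i hv (hc.eq_sum_coord hx hv) hi hlt k ?_)
    rw [hc.eq_of_coord_ne_zero hx hy hym hk] at hle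
    exact_mod_cast hle

end IsCenter

/-- The combination `u` has weight `p` for `h₀`, the square of `ad e₀` kills it, and it maps
`z i` to `c • z k`, where `c` is not zero. -/
structure IsShift (h₀ e₀ : Comb) {n : ℕ} (z : Fin n → Comb) (i k : Fin n) (u : Comb) (p : ℕ)
    (c : ℤ) : Prop where
  weight : null (smulAdd (-p) u (bilinExt structureConst h₀ u)) = true
  sq : null (bilinExt structureConst e₀ (bilinExt structureConst e₀ u)) = true
  lie : null (smulAdd (-c) (z k) (bilinExt structureConst u (z i))) = true
  ne_zero : c ≠ 0

namespace IsShift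

variable {L : Type*} [LieRing L] [LieAlgebra ℂ L] {x : ℕ → L} (hx : IsChevalley x)
  {h₀ e₀ u : Comb} {n p : ℕ} {z : Fin n → Comb} {i k : Fin n} {c : ℤ}
  (hu : IsShift h₀ e₀ z i k u p c) {f v : L} (ht : IsSl2Triple (eval x h₀) (eval x e₀) f)
  (hv : InCenterOfCentralizer L (eval x e₀) v) {a : Fin n → ℂ}
  (hva : v = ∑ j, a j • eval x (z j)) (hi : a i ≠ 0) (hlt : ∀ j < i, a j = 0)

include hx hu ht hv hva hi hlt

lemma mem_bracketSpace_of_mem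
    (hgt : ∀ j > i, ⁅eval x u, eval x (z j)⁆ ∈ bracketSpace (eval x e₀) f v) :
    eval x (z k) ∈ bracketSpace (eval x e₀) f v := by
  have hmem := lie_mem_bracketSpace ht hv
    (by simpa only [Int.cast_natCast] using hx.lie_eval_eq_smul hu.weight)
    (by rw [lie_eval_eval hx.lie, lie_eval_eval hx.lie, eval_eq_zero_of_null x hu.sq])
  generalize bracketSpace (eval x e₀) f v = S at hgt hmem ⊢
  rw [hva, lie_sum, ← Finset.add_sum_erase _ _ (Finset.mem_univ i), Submodule.add_mem_iff_left,
    lie_smul,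
    hx.lie_eval_eq_smul hu.lie, Submodule.smul_mem_iff _ hi,
    Submodule.smul_mem_iff _ (Int.cast_ne_zero.2 hu.ne_zero)] at hmem
  · exact hmem
  · refine Submodule.sum_mem _ fun j hj => ?_
    rw [lie_smul]
    rcases lt_or_gt_of_ne (Finset.ne_of_mem_erase hj) with hji | hij
    · rw [hlt j hji, zero_smul]
      exact Submodule.zero_mem _
    · exact Submodule.smul_mem _ _ (hgt j hij)

lemma mem_bracketSpace (hgt : ∀ j > i, null (bilinExt structureConst u (z j)) = true) :
    eval x (z k) ∈ bracketSpace (eval x e₀) f v :=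
  hu.mem_bracketSpace_of_mem hx ht hv hva hi hlt fun j hj => by
    rw [lie_eval_eval hx.lie, eval_eq_zero_of_null x (hgt j hj)]
    exact Submodule.zero_mem _

end IsShift

/-! ### The distinguished orbits which are not regular -/

section Representatives

/-- A representative of the orbit `F₄(a₁)`. -/
def repA₁ : Comb := [(7, 1), (4, 1), (6, 1), (12, 1)]

/-- The neutral element of an `sl₂`-triple of `repA₁`. -/
def neutA₁ : Comb := [(0, 10), (1, 18), (2, 26), (3, 14)]

/-- A basis of the centre of the centralizer of `repA₁`. -/
def centerA₁ : Fin 3 → Comb := ![repA₁, [(25, 1), (22, 1)], [(27, 1)]]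

/-- A representative of the orbit `F₄(a₂)`. -/
def repA₂ : Comb := [(4, 1), (9, 1), (10, 1), (16, 1)]

/-- The neutral element of an `sl₂`-triple of `repA₂`. -/
def neutA₂ : Comb := [(0, 8), (1, 14), (2, 20), (3, 10)]

/-- A basis of the centre of the centralizer of `repA₂`. -/
def centerA₂ : Fin 3 → Comb := ![repA₂, [(26, 1)], [(27, 1)]]

/-- A representative of the orbit `F₄(a₃)`. -/
def repA₃ : Comb := [(17, 1), (9, 1), (16, 1), (15, 1)]

/-- The neutral element of an `sl₂`-triple of `repA₃`. -/
def neutA₃ : Comb := [(0, 4), (1, 8), (2, 12), (3, 6)]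

/-- A basis of the centre of the centralizer of `repA₃`. -/
def centerA₃ : Fin 3 → Comb := ![repA₃, [(26, 1)], [(27, 1)]]

set_option maxRecDepth 100000 in
lemma isCenter_repA₁ : IsCenter neutA₁ repA₁ centerA₁ ![12, 22, 27] ![2, 10, 14]
    [[(13, 1), (11, 1)], [(24, 1)]] := by
  constructor <;> decide +kernel

set_option maxRecDepth 100000 in
lemma isCenter_repA₂ : IsCenter neutA₂ repA₂ centerA₂ ![4, 26, 27] ![2, 10, 10]
    [[(10, 1)], [(13, 1), (6, 3), (8, 1), (12, -1)]] := by
  constructor <;> decide +kernel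

set_option maxRecDepth 100000 in
lemma isCenter_repA₃ : IsCenter neutA₃ repA₃ centerA₃ ![17, 26, 27] ![2, 6, 6]
    [[(12, 1), (10, 2), (11, -1)], [(14, 1), (6, 2), (13, 1)]] := by
  constructor <;> decide +kernel

variable {L : Type*} [LieRing L] [LieAlgebra ℂ L] {x : ℕ → L} (hx : IsChevalley x) {f : L}

include hx

set_option maxRecDepth 100000 in
lemma propertyP_repA₁ (ht : IsSl2Triple (eval x neutA₁) (eval x repA₁) f) :
    PropertyP L (eval x repA₁) (eval x neutA₁) f := by
  refine isCenter_repA₁.propertyP hx fun v a i hv hva hi hlt k hk => ?_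
  obtain rfl : k = 2 := by decide +revert
  have mem {u p c} (hu : IsShift neutA₁ repA₁ centerA₁ i 2 u p c) :=
    hu.mem_bracketSpace hx ht hv hva hi hlt
  obtain rfl | rfl | rfl : i = 0 ∨ i = 1 ∨ i = 2 := by lia
  · exact mem (u := [(26, 1)]) (p := 12) (c := -1)
      (by constructor <;> decide +kernel) (by decide +kernel)
  · exact mem (u := [(16, 2), (10, -3), (14, 1)]) (p := 4) (c := -5)
      (by constructor <;> decide +kernel) (by decide +kernel)
  · exact mem (u := neutA₁) (p := 0) (c := 14)
      (by constructor <;> decide +kernel) (by decide +kernel)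

set_option maxRecDepth 100000 in
lemma propertyP_repA₂ (ht : IsSl2Triple (eval x neutA₂) (eval x repA₂) f) :
    PropertyP L (eval x repA₂) (eval x neutA₂) f := by
  refine isCenter_repA₂.propertyP hx fun v a i hv hva hi hlt k hk => ?_
  have hk' : k = 1 ∨ k = 2 := by decide +revert
  have mem {k u p c} (hu : IsShift neutA₂ repA₂ centerA₂ i k u p c) :=
    hu.mem_bracketSpace hx ht hv hva hi hlt
  obtain rfl | rfl | rfl : i = 0 ∨ i = 1 ∨ i = 2 := by lia
  · obtain rfl | rfl := hk'
    · exact mem (u := [(24, 1)]) (p := 8) (c := -2)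
        (by constructor <;> decide +kernel) (by decide +kernel)
    · exact mem (u := [(22, 1)]) (p := 8) (c := 1)
        (by constructor <;> decide +kernel) (by decide +kernel)
  · have mem_one := mem (k := 1) (u := [(2, 5), (0, 4), (1, 7)]) (p := 0) (c := 5)
      (by constructor <;> decide +kernel) (by decide +kernel)
    obtain rfl | rfl := hk'
    · exact mem_one
    · have hu : IsShift neutA₂ repA₂ centerA₂ 1 2 [(31, 3), (5, -1), (7, -5), (29, 3)] 0 (-5) := by
        constructor <;> decide +kernel
      refine hu.mem_bracketSpace_of_mem hx ht hv hva hi hlt fun j hj => ?_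
      obtain rfl : j = 2 := by decide +revert
      rw [hx.lie_eval_eq_smul (c := 3) (r := centerA₂ 1) (by decide +kernel)]
      exact Submodule.smul_mem _ _ mem_one
  · obtain rfl | rfl := hk'
    · exact mem (u := [(31, 3), (5, -1), (7, -5), (29, 3)]) (p := 0) (c := 3)
        (by constructor <;> decide +kernel) (by decide +kernel)
    · exact mem (u := neutA₂) (p := 0) (c := 10)
        (by constructor <;> decide +kernel) (by decide +kernel)

set_option maxRecDepth 100000 in
lemma propertyP_repA₃ (ht : IsSl2Triple (eval x neutA₃) (eval x repA₃) f) :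
    PropertyP L (eval x repA₃) (eval x neutA₃) f := by
  refine isCenter_repA₃.propertyP hx fun v a i hv hva hi hlt k hk => ?_
  have hk' : k = 1 ∨ k = 2 := by decide +revert
  have mem {k u p c} (hu : IsShift neutA₃ repA₃ centerA₃ i k u p c) :=
    hu.mem_bracketSpace hx ht hv hva hi hlt
  obtain rfl | rfl | rfl : i = 0 ∨ i = 1 ∨ i = 2 := by lia
  · obtain rfl | rfl := hk'
    · exact mem (u := [(19, 1)]) (p := 4) (c := 1)
        (by constructor <;> decide +kernel) (by decide +kernel)
    · exact mem (u := [(22, 1)]) (p := 4) (c := 1)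
        (by constructor <;> decide +kernel) (by decide +kernel)
  · have mem_two := mem (k := 2) (u := [(28, 1), (7, 1)]) (p := 0) (c := 1)
      (by constructor <;> decide +kernel) (by decide +kernel)
    obtain rfl | rfl := hk'
    · have hu : IsShift neutA₃ repA₃ centerA₃ 1 1 neutA₃ 0 6 := by
        constructor <;> decide +kernel
      refine hu.mem_bracketSpace_of_mem hx ht hv hva hi hlt fun j hj => ?_
      obtain rfl : j = 2 := by decide +revert
      rw [hx.lie_eval_eq_smul (c := 6) (r := centerA₃ 2) (by decide +kernel)]
      exact Submodule.smul_mem _ _ mem_two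
    · exact mem_two
  · obtain rfl | rfl := hk'
    · exact mem (u := [(31, 1), (4, 1)]) (p := 0) (c := 1)
        (by constructor <;> decide +kernel) (by decide +kernel)
    · exact mem (u := neutA₃) (p := 0) (c := 6)
        (by constructor <;> decide +kernel) (by decide +kernel)

end Representatives

/-! ### Weights -/

section Weights

open CartanMatrix (F₄)

/-- The coordinates of the positive roots with respect to the simple roots, in the order of the
basis vectors. -/
def posRoots : List (Fin 4 → ℤ) :=
  [![1, 0, 0, 0], ![0, 1, 0, 0], ![0, 0, 1, 0], ![0, 0, 0, 1], ![1, 1, 0, 0], ![0, 1, 1, 0],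
    ![0, 0, 1, 1], ![1, 1, 1, 0], ![0, 2, 1, 0], ![0, 1, 1, 1], ![1, 2, 1, 0], ![1, 1, 1, 1],
    ![0, 2, 1, 1], ![2, 2, 1, 0], ![1, 2, 1, 1], ![0, 2, 2, 1], ![2, 2, 1, 1], ![1, 2, 2, 1],
    ![2, 2, 2, 1], ![1, 3, 2, 1], ![2, 3, 2, 1], ![2, 4, 2, 1], ![2, 4, 3, 1], ![2, 4, 3, 2]]

/-- The weight of a basis vector, in coordinates with respect to the simple roots. -/
def root (k : ℕ) : Fin 4 → ℤ :=
  ([0, 0, 0, 0] ++ posRoots ++ posRoots.map Neg.neg).getD k 0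

/-- The value of the weight of a basis vector at the element of the Cartan subalgebra at which
the simple roots have the values `d`. -/
def wt (d : Fin 4 → ℤ) (k : ℕ) : ℤ := root k ⬝ᵥ d

/-- The number of basis vectors of a given weight. -/
def mult (d : Fin 4 → ℤ) (n : ℤ) : ℕ := ((Finset.range 52).filter fun k => wt d k = n).card

set_option maxRecDepth 100000 in
lemma null_cartan : ∀ i : Fin 4, ∀ k < 52,
    null (smulAdd (-wt (F₄ i) k) [(k, 1)] (bilinExt structureConst [(i, 1)] [(k, 1)])) = true := by
  decide +kernel

lemma wt_eq_zero (d : Fin 4 → ℤ) {k : ℕ} (hk : k < 4) : wt d k = 0 := by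
  have h : ∀ k < 4, root k = 0 := by decide +kernel
  rw [wt, h k hk, zero_dotProduct]

lemma wt_nonneg {d : Fin 4 → ℤ} (hd : 0 ≤ d) {k : ℕ} (hk : k < 28) : 0 ≤ wt d k := by
  have h : ∀ k < 28, ∀ i, 0 ≤ root k i := by decide +kernel
  exact dotProduct_nonneg_of_nonneg (h k hk) hd

lemma wt_nonpos {d : Fin 4 → ℤ} (hd : 0 ≤ d) {k : ℕ} (hk : 28 ≤ k) (hk' : k < 52) :
    wt d k ≤ 0 := by
  have h : ∀ k < 52, 28 ≤ k → ∀ i, 0 ≤ (-root k) i := by decide +kernel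
  rw [wt, ← neg_nonneg, ← neg_dotProduct]
  exact dotProduct_nonneg_of_nonneg (h k hk' hk) hd

lemma wt_add_four (d : Fin 4 → ℤ) (i : Fin 4) : wt d (i + 4) = d i := by
  have h : ∀ i : Fin 4, root (i + 4) = Pi.single i 1 := by decide +kernel
  rw [wt, h i, single_one_dotProduct]

lemma wt_add_twentyEight (d : Fin 4 → ℤ) (i : Fin 4) : wt d (i + 28) = -d i := by
  have h : ∀ i : Fin 4, root (i + 28) = -Pi.single i 1 := by decide +kernel
  rw [wt, h i, neg_dotProduct, single_one_dotProduct]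

variable {L : Type*} [LieRing L] [LieAlgebra ℂ L] {x : ℕ → L} {h : L} {d : Fin 4 → ℤ}

namespace IsChevalley

variable (hx : IsChevalley x)

include hx

lemma lie_cartan (i : Fin 4) {k : ℕ} (hk : k < 52) : ⁅x i, x k⁆ = (wt (F₄ i) k : ℂ) • x k := by
  simpa using hx.lie_eval_eq_smul (null_cartan i k hk)

lemma lie_sum_cartan (a : Fin 4 → ℂ) {k : ℕ} (hk : k < 52) :
    ⁅∑ i, a i • x i, x k⁆ = (∑ i, a i * wt (F₄ i) k) • x k := by
  rw [sum_lie, Finset.sum_smul]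
  refine Finset.sum_congr rfl fun i _ => ?_
  rw [smul_lie, hx.lie_cartan i hk, smul_smul]

lemma lie_eq_zero_of_lt_four (i : Fin 4) {k : ℕ} (hk : k < 4) : ⁅x i, x k⁆ = 0 := by
  rw [hx.lie_cartan i (by lia), wt_eq_zero _ hk, Int.cast_zero, zero_smul]

end IsChevalley

/-! ### Chevalley bases adapted to a semisimple element -/

/-- The element `h` is in the Cartan subalgebra given by a Chevalley basis, and the values of the
simple roots at `h` are the integers `d`. -/
structure IsAdapted (x : ℕ → L) (h : L) (d : Fin 4 → ℤ) : Prop where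
  isChevalley : IsChevalley x
  mem : ∃ a : Fin 4 → ℂ, h = ∑ i, a i • x i
  lie : ∀ i : Fin 4, ⁅h, x (i + 4)⁆ = (d i : ℂ) • x (i + 4)

namespace IsAdapted

lemma map_lieEquiv (hd : IsAdapted x h d) (g : L ≃ₗ⁅ℂ⁆ L) :
    IsAdapted (fun k => g (x k)) (g h) d where
  isChevalley := hd.isChevalley.map_lieEquiv g
  mem := by
    obtain ⟨a, rfl⟩ := hd.mem
    exact ⟨a, (map_sum g _ _).trans (Finset.sum_congr rfl fun i _ => map_smul g _ _)⟩
  lie i := by rw [← LieEquiv.map_lie, hd.lie i]; exact map_smul g _ _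

section Coordinates

variable (hd : IsAdapted x h d)

include hd in
lemma lie_eq {k : ℕ} (hk : k < 52) : ⁅h, x k⁆ = (wt d k : ℂ) • x k := by
  have hx := hd.isChevalley
  obtain ⟨a, rfl⟩ := hd.mem
  have hsum (i : Fin 4) : ∑ j, a j * F₄ j i = d i := by
    have := (hx.lie_sum_cartan a (by lia : (i : ℕ) + 4 < 52)).symm.trans (hd.lie i)
    simpa only [wt_add_four] using smul_left_injective ℂ (hx.ne_zero (by lia)) this
  rw [hx.lie_sum_cartan a hk]
  congr 1
  simp only [wt, dotProduct, Int.cast_sum, Int.cast_mul, ← hsum, Finset.mul_sum]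
  rw [Finset.sum_comm]
  exact Finset.sum_congr rfl fun i _ => Finset.sum_congr rfl fun j _ => mul_left_comm _ _ _

lemma coord_lie {k : ℕ} (hk : k < 52) (v : L) :
    hd.isChevalley.coord k ⁅h, v⁆ = wt d k * hd.isChevalley.coord k v := by
  conv_lhs => rw [← hd.isChevalley.sum_coord v]
  rw [lie_sum, map_sum, Finset.sum_eq_single_of_mem k (Finset.mem_range.2 hk) fun j hj hjk => ?_]
  · rw [lie_smul, hd.lie_eq hk, map_smul, map_smul, hd.isChevalley.coord_apply hk, if_pos rfl,
      smul_eq_mul, smul_eq_mul, mul_one, mul_comm]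
  · rw [lie_smul, hd.lie_eq (Finset.mem_range.1 hj), map_smul, map_smul,
      hd.isChevalley.coord_apply hk, if_neg hjk, smul_zero, smul_zero]

lemma coord_eq_zero_of_lie_eq_smul {n : ℤ} {v : L} (hv : ⁅h, v⁆ = (n : ℂ) • v) {k : ℕ}
    (hk : k < 52) (hn : wt d k ≠ n) : hd.isChevalley.coord k v = 0 := by
  have := hd.coord_lie hk v
  rw [hv, map_smul, smul_eq_mul] at this
  exact (mul_eq_mul_right_iff.1 this).resolve_left (Int.cast_injective.ne hn.symm)

lemma coord_eq_zero_of_mem_engel {v : L} (hv : v ∈ LieSubalgebra.engel ℂ h) {k : ℕ} (hk : k < 52)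
    (hk' : wt d k ≠ 0) : hd.isChevalley.coord k v = 0 := by
  obtain ⟨n, hn⟩ := (LieSubalgebra.mem_engel_iff ℂ h v).1 hv
  have hpow (m : ℕ) : hd.isChevalley.coord k ((LieAlgebra.ad ℂ L h ^ m) v) =
      (wt d k : ℂ) ^ m * hd.isChevalley.coord k v := by
    induction m with
    | zero => simp
    | succ m ih =>
      rw [pow_succ', Module.End.mul_apply, LieAlgebra.ad_apply (R := ℂ), hd.coord_lie hk, ih,
        pow_succ', mul_assoc]
  have := hpow n
  rw [hn, map_zero, eq_comm, mul_eq_zero] at this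
  exact this.resolve_left (pow_ne_zero _ (Int.cast_ne_zero.2 hk'))

include hd in
lemma finrank_eigenspace (n : ℤ) :
    Module.finrank ℂ ((LieAlgebra.ad ℂ L h).eigenspace (n : ℂ)) = mult d n := by
  have hS (v : L) : v ∈ (LieAlgebra.ad ℂ L h).eigenspace (n : ℂ) ↔ ⁅h, v⁆ = (n : ℂ) • v :=
    Module.End.mem_eigenspace_iff
  rw [mult, ← Fintype.card_coe]
  refine hd.isChevalley.finrank_eq_card (p := fun i => i.1) (y := fun i => x i.1) (fun i => ?_)
    (fun i j => ?_) fun v hv => ?_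
  · obtain ⟨hi, hi'⟩ := Finset.mem_filter.1 i.2
    rw [hS, hd.lie_eq (Finset.mem_range.1 hi), hi']
  · rw [hd.isChevalley.coord_apply (Finset.mem_range.1 (Finset.mem_filter.1 i.2).1)]
    exact if_congr Subtype.ext_iff.symm rfl rfl
  · rw [Finset.sum_coe_sort _ fun k => hd.isChevalley.coord k v • x k]
    conv_lhs => rw [← hd.isChevalley.sum_coord v]
    refine (Finset.sum_filter_of_ne fun k hk hk' => ?_).symm
    by_contra hne
    exact hk' (by rw [hd.coord_eq_zero_of_lie_eq_smul ((hS v).1 hv) (Finset.mem_range.1 hk) hne,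
      zero_smul])

end Coordinates

end IsAdapted

/-! ### Cartan subalgebras -/

/-- The neutral element of an `sl₂`-triple in the regular orbit. -/
def neutReg : Comb := [(0, 16), (1, 30), (2, 42), (3, 22)]

namespace IsChevalley

variable (hx : IsChevalley x)

include hx

set_option maxRecDepth 100000 in
lemma isAdapted_neutReg : IsAdapted x (eval x neutReg) fun _ => 2 where
  isChevalley := hx
  mem := ⟨![16, 30, 42, 22], by
    simp [neutReg, Fin.sum_univ_succ, ← Int.cast_smul_eq_zsmul ℂ]⟩
  lie i := by
    have h : ∀ i : Fin 4, null
        (smulAdd (-2) [(i + 4, 1)] (bilinExt structureConst neutReg [(i + 4, 1)])) = true := by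
      decide +kernel
    simpa using hx.lie_eval_eq_smul (h i)

lemma eq_sum_of_mem_engel_neutReg {v : L} (hv : v ∈ LieSubalgebra.engel ℂ (eval x neutReg)) :
    v = ∑ i : Fin 4, hx.coord i v • x i := by
  have h : ∀ k < 52, 4 ≤ k → wt (fun _ => 2) k ≠ 0 := by decide +kernel
  conv_lhs => rw [← hx.sum_coord v]
  rw [← Finset.sum_range fun i => hx.coord i v • x i]
  refine (Finset.sum_subset (Finset.range_subset_range.2 (by lia)) fun k hk hk' => ?_).symm
  rw [Finset.mem_range] at hk hk'
  rw [hx.isAdapted_neutReg.coord_eq_zero_of_mem_engel hv hk (h k hk (by lia)), zero_smul]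

lemma finrank_engel_neutReg : Module.finrank ℂ (LieSubalgebra.engel ℂ (eval x neutReg)) = 4 := by
  refine (hx.finrank_eq_card (S := (LieSubalgebra.engel ℂ (eval x neutReg)).toSubmodule)
    (p := fun i : Fin 4 => i) (y := fun i => x i) (fun i => mem_engel_of_lie_eq_zero ?_)
    (fun i j => ?_) fun v hv => hx.eq_sum_of_mem_engel_neutReg hv).trans (Fintype.card_fin 4)
  · rw [hx.isAdapted_neutReg.lie_eq (by lia), wt_eq_zero _ i.2, Int.cast_zero, zero_smul]
  · rw [hx.coord_apply (by lia)]
    exact if_congr Fin.ext_iff.symm rfl rfl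

variable [FiniteDimensional ℂ L]

lemma finrank_engel_neutReg_eq_rank :
    Module.finrank ℂ (LieSubalgebra.engel ℂ (eval x neutReg)) = LieAlgebra.rank ℂ L := by
  refine finrank_engel_eq_rank_of_le fun y hy z hz => mem_engel_of_lie_eq_zero ?_
  rw [hx.eq_sum_of_mem_engel_neutReg hy, hx.eq_sum_of_mem_engel_neutReg hz, sum_lie]
  refine Finset.sum_eq_zero fun i _ => ?_
  rw [lie_sum]
  refine Finset.sum_eq_zero fun j _ => ?_
  rw [smul_lie, lie_smul, hx.lie_eq_zero_of_lt_four i j.2, smul_zero, smul_zero]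

lemma rank_eq_four : LieAlgebra.rank ℂ L = 4 :=
  hx.finrank_engel_neutReg_eq_rank.symm.trans hx.finrank_engel_neutReg

/-- The element `h` lies in some Cartan subalgebra, and all of these are conjugate. -/
lemma exists_isAdapted [LieAlgebra.IsKilling ℂ L] {e f : L} (ht : IsSl2Triple h e f)
    (hdist : IsDistinguished L e) : ∃ (y : ℕ → L) (d : Fin 4 → ℤ), IsAdapted y h d := by
  obtain ⟨z, hz, hhz⟩ :=
    exists_mem_engel_finrank_eq_rank fun y => lie_eq_zero_of_mem_engel ht hdist (y := y)
  obtain ⟨g, hg⟩ := exists_lieEquiv_engel_eq hx.finrank_engel_neutReg_eq_rank hz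
  obtain ⟨u, rfl⟩ := g.surjective h
  have hu := hx.eq_sum_of_mem_engel_neutReg ((hg u).1 hhz)
  have hlie (i : Fin 4) : ∃ n : ℤ, ⁅u, x (i + 4)⁆ = (n : ℂ) • x (i + 4) := by
    have hc := hx.lie_sum_cartan (fun j => hx.coord j u) (by lia : (i : ℕ) + 4 < 52)
    rw [← hu] at hc
    have hgc := congrArg g hc
    rw [LieEquiv.map_lie, show g (_ • x _) = _ from map_smul g _ _] at hgc
    obtain ⟨n, hn⟩ := exists_int_of_lie_eq_smul ht
      ((hx.map_lieEquiv g).ne_zero (by lia : (i : ℕ) + 4 < 52)) hgc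
    exact ⟨n, hn ▸ hc⟩
  choose d hd using hlie
  exact ⟨_, d, (IsAdapted.mk hx ⟨_, hu⟩ hd).map_lieEquiv g⟩

end IsChevalley

end Weights

/-! ### Dominance -/

section Dominance

open CartanMatrix (F₄)

variable {L : Type*} [LieRing L] [LieAlgebra ℂ L] {x : ℕ → L} {h : L} {d : Fin 4 → ℤ}

namespace IsChevalley

variable (hx : IsChevalley x)

include hx in
set_option maxRecDepth 100000 in
lemma lie_pos_neg (i : Fin 4) : ⁅x (i + 4), x (i + 28)⁆ = x i := by
  have h : ∀ i : Fin 4, null (smulAdd (-1) [(i, 1)]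
      (bilinExt structureConst [(i + 4, 1)] [(i + 28, 1)])) = true := by
    decide +kernel
  simpa using hx.lie_eval_eq_smul (h i)

set_option maxRecDepth 100000 in
lemma coord_lie_neg_eq_zero {i : Fin 4} {k : ℕ} (hk : 4 ≤ k) (hk' : k < 28) (hki : k ≠ i + 4)
    {m : ℕ} (hm : 28 ≤ m) (hm' : m < 52) : hx.coord m ⁅x k, x (i + 28)⁆ = 0 := by
  have h : ∀ i : Fin 4, ∀ k < (28 : ℕ), 4 ≤ k → k = i + 4 ∨
      ∀ m < 52, 28 ≤ m → coeff (structureConst k (i + 28)) m = 0 := by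
    decide +kernel
  rw [hx.lie, hx.coord_eval hm', (h i k hk' hk).resolve_left hki m hm' hm, Int.cast_zero]

end IsChevalley

namespace IsAdapted

lemma exists_reflection [FiniteDimensional ℂ L] (hd : IsAdapted x h d) (i : Fin 4) :
    ∃ y : ℕ → L, IsAdapted y h (d - d i • F₄ i) := by
  have hx := hd.isChevalley
  have hF₄ : ∀ i, F₄ i i = 2 := by decide
  have hHE := hx.lie_cartan i (by lia : (i : ℕ) + 4 < 52)
  have hHF := hx.lie_cartan i (by lia : (i : ℕ) + 28 < 52)
  have hhF := hd.lie_eq (by lia : (i : ℕ) + 28 < 52)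
  rw [wt_add_four, hF₄] at hHE
  rw [wt_add_twentyEight, hF₄] at hHF
  rw [wt_add_twentyEight] at hhF
  obtain ⟨g, hg⟩ := exists_lieEquiv_reflection (hx.lie_pos_neg i) (mod_cast hHE) (mod_cast hHF)
    (hd.lie i) (mod_cast hhF)
  have hgd : IsAdapted x (g h) (d - d i • F₄ i) := by
    refine ⟨hx, ?_, fun j => ?_⟩
    · obtain ⟨a, ha⟩ := hd.mem
      refine ⟨a - Pi.single i (d i : ℂ), ?_⟩
      simp only [Pi.sub_apply, sub_smul, Finset.sum_sub_distrib, ← ha, hg, Pi.single_apply,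
        ite_smul, zero_smul, Finset.sum_ite_eq', Finset.mem_univ, if_true]
    · rw [hg, sub_lie, smul_lie, hd.lie j, hx.lie_cartan i (by lia), wt_add_four, smul_smul,
        ← sub_smul, Pi.sub_apply, Pi.smul_apply, smul_eq_mul, Int.cast_sub, Int.cast_mul]
  exact ⟨_, g.symm_apply_apply h ▸ hgd.map_lieEquiv g.symm⟩

/-- The linear form `ρ` on the Cartan subalgebra satisfies `ρ (s h) = ρ h - α h` for the
reflection `s` at a simple root `α`, so `h` is dominant if `ρ h` is maximal. -/
lemma exists_nonneg [FiniteDimensional ℂ L] (hd : IsAdapted x h d) :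
    ∃ (y : ℕ → L) (d' : Fin 4 → ℤ), IsAdapted y h d' ∧ 0 ≤ d' := by
  have hfin : {n : ℤ | (LieAlgebra.ad ℂ L h).HasEigenvalue (n : ℂ)}.Finite :=
    (Module.End.finite_hasEigenvalue (LieAlgebra.ad ℂ L h)).preimage Int.cast_injective.injOn
  obtain ⟨B, hB⟩ := hfin.bddAbove
  let ρ : Fin 4 → ℤ := ![11, 21, 15, 8]
  have hρ : ∀ i, 0 ≤ ρ i := by decide
  have hρF₄ : ∀ i, ρ ⬝ᵥ F₄ i = 1 := by decide
  have hbdd : ∀ n, (∃ y d', IsAdapted y h d' ∧ ρ ⬝ᵥ d' = n) → n ≤ ρ ⬝ᵥ fun _ => B := by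
    rintro _ ⟨y, d', hd', rfl⟩
    refine dotProduct_le_dotProduct_of_nonneg_left (fun i => hB ?_) hρ
    exact Module.End.hasEigenvalue_of_hasEigenvector
      ⟨Module.End.mem_eigenspace_iff.2 (hd'.lie i), hd'.isChevalley.ne_zero (by lia)⟩
  obtain ⟨n, ⟨y, d', hd', rfl⟩, hmax⟩ := Int.exists_greatest_of_bdd ⟨_, hbdd⟩ ⟨_, x, d, hd, rfl⟩
  refine ⟨y, d', hd', fun i => ?_⟩
  obtain ⟨y', hy'⟩ := hd'.exists_reflection i
  have := hmax _ ⟨y', _, hy', rfl⟩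
  rwa [dotProduct_sub, dotProduct_smul, hρF₄, smul_eq_mul, mul_one, sub_le_self_iff] at this

lemma lie_neg_eq_zero (hd : IsAdapted x h d) (hd0 : 0 ≤ d) {e : L} (he : ⁅h, e⁆ = (2 : ℂ) • e)
    {i : Fin 4} (hi : 2 < d i) : ⁅e, x (i + 28)⁆ = 0 := by
  have hx := hd.isChevalley
  refine hx.ext_coord fun m hm => ?_
  rw [map_zero]
  by_cases hm' : m < 28
  · have hlie : ⁅h, ⁅e, x (i + 28)⁆⁆ = ((2 - d i : ℤ) : ℂ) • ⁅e, x (i + 28)⁆ := by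
      rw [lie_lie_eq_add_smul he (hd.lie_eq (by lia)), wt_add_twentyEight]
      push_cast
      rw [sub_eq_add_neg]
    have := wt_nonneg hd0 hm'
    exact hd.coord_eq_zero_of_lie_eq_smul hlie hm (by lia)
  · conv_lhs => rw [← hx.sum_coord e]
    rw [sum_lie, map_sum]
    refine Finset.sum_eq_zero fun k hk => ?_
    rw [Finset.mem_range] at hk
    rw [smul_lie, map_smul]
    by_cases hk2 : wt d k = 2
    · have hk4 : 4 ≤ k := by
        by_contra! hlt
        rw [wt_eq_zero d hlt] at hk2
        contradiction
      have hk28 : k < 28 := by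
        by_contra! hle
        have := wt_nonpos hd0 hle hk
        lia
      have hki : k ≠ i + 4 := by
        rintro rfl
        rw [wt_add_four] at hk2
        lia
      rw [hx.coord_lie_neg_eq_zero hk4 hk28 hki (not_lt.1 hm') hm, smul_zero]
    · rw [hd.coord_eq_zero_of_lie_eq_smul (mod_cast he) hk hk2, zero_smul]

lemma le_two [FiniteDimensional ℂ L] {e f : L} (hd : IsAdapted x h d) (hd0 : 0 ≤ d)
    (ht : IsSl2Triple h e f) : d ≤ 2 := by
  intro i
  by_contra! hlt
  obtain ⟨n, hn⟩ := exists_nat_of_lie_eq_smul ht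
    (hd.isChevalley.ne_zero (by lia : (i : ℕ) + 28 < 52)) (hd.lie_eq (by lia))
    (hd.lie_neg_eq_zero hd0 (ht.lie_h_e_smul ℂ) hlt)
  rw [wt_add_twentyEight] at hn
  have : -d i = n := by exact_mod_cast hn
  have : 2 < d i := hlt
  lia

end IsAdapted

end Dominance

/-! ### Classification of the distinguished orbits -/

section Classification

/-- A representative of the regular orbit. -/
def repReg : Comb := [(7, 1), (4, 1), (5, 1), (6, 1)]

/-- The elements `s` and `r` are the neutral element and the nilpositive element of an
`sl₂`-triple in the distinguished orbit with weighted Dynkin diagram `d`. -/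
structure IsDistinguishedPair (s r : Comb) (d : Fin 4 → ℤ) : Prop where
  simple : ∀ i : Fin 4,
    null (smulAdd (-d i) [(i + 4, 1)] (bilinExt structureConst s [(i + 4, 1)])) = true
  cartan : null (bilinExt structureConst neutReg s) = true
  weight : null (smulAdd (-2) r (bilinExt structureConst s r)) = true
  distinguished : vanish [s, r] (spanEqs ![] ![]) = true

set_option maxRecDepth 100000 in
lemma isDistinguishedPair_A₁ : IsDistinguishedPair neutA₁ repA₁ ![2, 0, 2, 2] := by
  constructor <;> decide +kernel

set_option maxRecDepth 100000 in
lemma isDistinguishedPair_A₂ : IsDistinguishedPair neutA₂ repA₂ ![2, 0, 2, 0] := by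
  constructor <;> decide +kernel

set_option maxRecDepth 100000 in
lemma isDistinguishedPair_A₃ : IsDistinguishedPair neutA₃ repA₃ ![0, 0, 2, 0] := by
  constructor <;> decide +kernel

set_option maxRecDepth 100000 in
lemma isDistinguishedPair_reg : IsDistinguishedPair neutReg repReg ![2, 2, 2, 2] := by
  constructor <;> decide +kernel

set_option maxRecDepth 100000 in
lemma eq_of_mult_zero_eq_mult_two : ∀ a b c d : Fin 3,
    mult ![(a : ℤ), b, c, d] 0 = mult ![(a : ℤ), b, c, d] 2 →
      ![(a : ℤ), b, c, d] ∈ [![2, 0, 2, 2], ![2, 0, 2, 0], ![0, 0, 2, 0], ![2, 2, 2, 2]] := by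
  decide +kernel

set_option maxRecDepth 100000 in
lemma vanish_simple_neutReg :
    vanish [[(4, 1)], [(5, 1)], [(6, 1)], [(7, 1)], neutReg] (spanEqs ![] ![]) = true := by
  decide +kernel

variable {L : Type*} [LieRing L] [LieAlgebra ℂ L] {x : ℕ → L}

lemma eq_zero_of_vanish (hx : IsChevalley x) {els : List Comb}
    (h : vanish els (spanEqs ![] ![]) = true) {v : L} (hv : ∀ s ∈ els, ⁅eval x s, v⁆ = 0) :
    v = 0 := by
  simpa using eq_sum_of_vanish hx h hv

set_option maxRecDepth 100000 in
lemma IsChevalley.finrank_centralizer_repReg (hx : IsChevalley x) :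
    Module.finrank ℂ (centralizer L (eval x repReg)) = 4 := by
  let p : Fin 4 → ℕ := ![7, 19, 23, 27]
  let z : Fin 4 → Comb := ![repReg, [(19, 1), (17, -2), (18, 1)], [(23, 1), (22, -1)], [(27, 1)]]
  have hvanish : vanish [repReg] (spanEqs p z) = true := by decide +kernel
  have hlt : ∀ i, p i < 52 := by decide
  have hnull : ∀ i, null (bilinExt structureConst (z i) repReg) = true := by decide +kernel
  have hcoeff : ∀ i j, coeff (z j) (p i) = if j = i then 1 else 0 := by decide +kernel
  refine (hx.finrank_eq_card (S := (centralizer L (eval x repReg)).toSubmodule) (p := p)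
    (y := fun i => eval x (z i)) (fun i => ?_) (fun i j => ?_)
    fun v hv => eq_sum_of_vanish hx hvanish ?_).trans (Fintype.card_fin 4)
  · change ⁅_, _⁆ = _
    rw [lie_eval_eval hx.lie, eval_eq_zero_of_null x (hnull i)]
  · rw [hx.coord_eval (hlt i), hcoeff]
    split_ifs <;> simp
  · have hv' : ⁅v, eval x repReg⁆ = 0 := hv
    simp [← lie_skew (eval x repReg) v, hv']

namespace IsAdapted

variable {e h f : L} {d : Fin 4 → ℤ} (hd : IsAdapted x h d)

include hd

lemma eq_eval {s r : Comb} (hs : IsDistinguishedPair s r d) : h = eval x s := by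
  have hx := hd.isChevalley
  have hsimple (i : Fin 4) : ⁅eval x [(i + 4, 1)], h - eval x s⁆ = 0 := by
    rw [← lie_skew, sub_lie, hx.lie_eval_eq_smul (hs.simple i)]
    simp [hd.lie i]
  refine sub_eq_zero.1 (eq_zero_of_vanish hx vanish_simple_neutReg ?_)
  simp only [List.mem_cons, List.not_mem_nil, or_false, forall_eq_or_imp, forall_eq]
  refine ⟨hsimple 0, hsimple 1, hsimple 2, hsimple 3, ?_⟩
  obtain ⟨a, ha⟩ := hd.mem
  rw [lie_sub, lie_eval_eval hx.lie, eval_eq_zero_of_null x hs.cartan, sub_zero, ha, lie_sum]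
  refine Finset.sum_eq_zero fun i _ => ?_
  rw [lie_smul, hx.isAdapted_neutReg.lie_eq (by lia), wt_eq_zero _ i.2, Int.cast_zero, zero_smul,
    smul_zero]

variable [FiniteDimensional ℂ L] [LieAlgebra.IsKilling ℂ L] (ht : IsSl2Triple h e f)
  (hdist : IsDistinguished L e)

include ht hdist

/-- The centralizer of `h` has an open orbit in the eigenspace of `ad h` for `2`, to which both `e`
and the given representative belong. -/
lemma exists_isChevalley {s r : Comb} (hs : IsDistinguishedPair s r d) :
    ∃ y : ℕ → L, IsChevalley y ∧ eval y s = h ∧ eval y r = e := by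
  have hx := hd.isChevalley
  obtain rfl := hd.eq_eval hs
  let K := (LieAlgebra.ad ℂ L (eval x s)).eigenspace 0
  let W := (LieAlgebra.ad ℂ L (eval x s)).eigenspace 2
  have hK {u : L} : u ∈ K ↔ ⁅eval x s, u⁆ = 0 := by simp [K]
  have hW {u : L} : u ∈ W ↔ ⁅eval x s, u⁆ = (2 : ℂ) • u := by simp [W]
  have hdim : Module.finrank ℂ K = Module.finrank ℂ W := finrank_eigenspace_zero_eq_two ht hdist
  have hr : eval x r ∈ W := hW.2 (mod_cast hx.lie_eval_eq_smul hs.weight)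
  have hKW : ∀ u ∈ K, ∀ w ∈ W, ⁅u, w⁆ ∈ W := fun u hu w hw => hW.2 <| by
    rw [leibniz_lie, hK.1 hu, hW.1 hw, zero_lie, zero_add, lie_smul]
  have hinj : Function.Injective ((adRestrict hKW).flip ⟨eval x r, hr⟩) :=
    (injective_iff_map_eq_zero _).2 fun u hu => Subtype.ext <| by
      have hur : ⁅(u : L), eval x r⁆ = 0 := congrArg Subtype.val hu
      refine eq_zero_of_vanish hx hs.distinguished ?_
      simpa [← lie_skew (eval x r), hur] using hK.1 u.2
  have hsurj := (LinearMap.injective_iff_surjective_of_finrank_eq_finrank hdim).1 hinj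
  obtain ⟨g, hg, hgh⟩ := exists_lieEquiv_of_surjective hKW hdim hr (hW.2 (ht.lie_h_e_smul ℂ))
    (fun w hw =>
      let ⟨u, hu⟩ := hsurj ⟨w, hw⟩
      ⟨u, u.2, congrArg Subtype.val hu⟩)
    fun w hw =>
      let ⟨u, hu, hue⟩ := exists_lie_e_eq_of_lie_h_eq_two_smul ht hdist (hW.1 hw)
      ⟨u, hK.2 hu, hue⟩
  refine ⟨_, hx.map_lieEquiv g, ?_, ?_⟩
  · refine (map_eval x (g : L →+ L) s).symm.trans (hgh _ fun u hu => ?_)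
    rw [← lie_skew, hK.1 hu, neg_zero]
  · exact (map_eval x (g : L →+ L) r).symm.trans hg

lemma mem_weightedDiagrams (hd0 : 0 ≤ d) :
    d ∈ [![2, 0, 2, 2], ![2, 0, 2, 0], ![0, 0, 2, 0], ![2, 2, 2, 2]] := by
  have hmult : mult d 0 = mult d 2 := by
    rw [← hd.finrank_eigenspace, ← hd.finrank_eigenspace, Int.cast_zero, Int.cast_ofNat]
    exact finrank_eigenspace_zero_eq_two ht hdist
  have hfin (i : Fin 4) : ∃ n : Fin 3, d i = n := by
    have h0 : 0 ≤ d i := hd0 i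
    have h2 : d i ≤ 2 := hd.le_two hd0 ht i
    exact ⟨⟨(d i).toNat, by lia⟩, by simp [h0]⟩
  choose n hn using hfin
  have hvec : d = ![(n 0 : ℤ), n 1, n 2, n 3] := funext fun i => by
    fin_cases i <;> exact hn _
  rw [hvec] at hmult ⊢
  exact eq_of_mult_zero_eq_mult_two _ _ _ _ hmult

end IsAdapted

end Classification

end F4

end

/-- Distinguished non-regular nilpotent elements of the complex simple
Lie algebra of type corresponding to `LieAlgebra.f₄` satisfy property (P). -/
theorem propertyP_of_type_8
    (L : Type*) [LieRing L] [LieAlgebra ℂ L] [FiniteDimensional ℂ L]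
    [LieAlgebra.IsSimple ℂ L]
    (htype : Nonempty (L ≃ₗ⁅ℂ⁆ LieAlgebra.f₄ ℂ))
    (e h f : L) (ht : IsSl2Triple h e f) (he : IsNilpotent (LieAlgebra.ad ℂ L e))
    (hdist : IsDistinguished L e)
    (hnonreg : Module.finrank ℂ ↥(centralizer L e) ≠ LieAlgebra.rank ℂ L) :
    PropertyP L e h f := by
  obtain ⟨φ⟩ := htype
  obtain ⟨x₀, hx₀⟩ := F4.exists_isChevalley φ
  obtain ⟨x₁, d₁, hd₁⟩ := hx₀.exists_isAdapted ht hdist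
  obtain ⟨x, d, hd, hd0⟩ := hd₁.exists_nonneg
  have hmem := hd.mem_weightedDiagrams ht hdist hd0
  simp only [List.mem_cons, List.not_mem_nil, or_false] at hmem
  rcases hmem with rfl | rfl | rfl | rfl
  · obtain ⟨y, hy, rfl, rfl⟩ := hd.exists_isChevalley ht hdist F4.isDistinguishedPair_A₁
    exact F4.propertyP_repA₁ hy ht
  · obtain ⟨y, hy, rfl, rfl⟩ := hd.exists_isChevalley ht hdist F4.isDistinguishedPair_A₂
    exact F4.propertyP_repA₂ hy ht
  · obtain ⟨y, hy, rfl, rfl⟩ := hd.exists_isChevalley ht hdist F4.isDistinguishedPair_A₃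
    exact F4.propertyP_repA₃ hy ht
  · obtain ⟨y, hy, rfl, rfl⟩ := hd.exists_isChevalley ht hdist F4.isDistinguishedPair_reg
    exact absurd (hy.finrank_centralizer_repReg.trans hy.rank_eq_four.symm) hnonreg
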